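/- Let R be an SMLL net and let R̂ be its closure: the net obtained by cutting each conclusion A of R containing an occurrence of ⊥ against the main conclusion of the net R°(A⊥), where R°(A) is defined by induction on A by: R°(1) is a one-link; R°(γ) for γ ∈ {⊥, X, X⊥} is an axiom link of conclusions γ⊥, γ with main conclusion γ; and R°(A₁⊗A₂) (resp. R°(A₁⅋A₂)) joins the main conclusions of R°(A₁) and R°(A₂) by a ⊗-link (resp. ⅋-link). Then the SIAM machine M_R is deadlock-free if and only if M_{R̂} is deadlock-free. -/

import Mathlib

/-! # SMLL: multiplicative linear logic with synchronization

Formalization of the proof-structures, correctness criterion, reduction and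
multi-token machine (SIAM) of Dal Lago, Faggian, Hasuo, Yoshimizu,
"The Geometry of Synchronization". -/

/-- SMLL formulas (in negation normal form):
`A ::= 1 | ⊥ | X | X⊥ | A ⊗ A | A ⅋ A`. -/
inductive Formula : Type
  | one : Formula
  | bot : Formula
  | var : ℕ → Formula
  | covar : ℕ → Formula
  | tens : Formula → Formula → Formula
  | parr : Formula → Formula → Formula
  deriving DecidableEq

namespace Formula

/-- Linear negation. -/
def dual : Formula → Formula
  | one => bot
  | bot => one
  | var n => covar n
  | covar n => var n
  | tens A B => parr A.dual B.dual
  | parr A B => tens A.dual B.dual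

/-- Positive formulas: `P ::= 1 | P ⊗ P`. -/
inductive Positive : Formula → Prop
  | one : Positive one
  | tens {A B : Formula} : Positive A → Positive B → Positive (tens A B)

/-- Negative formulas: `N ::= ⊥ | N ⅋ N`. -/
inductive Negative : Formula → Prop
  | bot : Negative bot
  | parr {A B : Formula} : Negative A → Negative B → Negative (parr A B)

/-- A formula is polarized when it is positive or negative. -/
def Polarized (A : Formula) : Prop := Positive A ∨ Negative A

/-- Whether `⊥` occurs in a formula. -/
def hasBotB : Formula → Bool
  | one => false
  | bot => true
  | var _ => false
  | covar _ => false
  | tens A B => hasBotB A || hasBotB B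
  | parr A B => hasBotB A || hasBotB B

/-- Addresses of occurrences inside a formula: `false` = left, `true` = right. -/
abbrev Addr := List Bool

/-- Subformula at a given address (if the address is meaningful). -/
def sub : Formula → Addr → Option Formula
  | A, [] => some A
  | tens A _, false :: m => sub A m
  | tens _ B, true :: m => sub B m
  | parr A _, false :: m => sub A m
  | parr _ B, true :: m => sub B m
  | _, _ :: _ => none

def IsAtom : Formula → Prop
  | one => True
  | bot => True
  | var _ => True
  | covar _ => True
  | tens _ _ => False
  | parr _ _ => False

/-- `m` is the address of an occurrence of an atom in `A`. -/
def AtomOcc (A : Formula) (m : Addr) : Prop := ∃ a, sub A m = some a ∧ IsAtom a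

/-- The atom occurrence at `m` in `A` is positive (it is `1` or `X`). -/
def PosOcc (A : Formula) (m : Addr) : Prop :=
  ∃ a, sub A m = some a ∧ (a = one ∨ ∃ n, a = var n)

/-- The atom occurrence at `m` in `A` is negative (it is `⊥` or `X⊥`). -/
def NegOcc (A : Formula) (m : Addr) : Prop :=
  ∃ a, sub A m = some a ∧ (a = bot ∨ ∃ n, a = covar n)

theorem NegOcc.atomOcc {A : Formula} {m : Addr} (h : NegOcc A m) : AtomOcc A m := by
  obtain ⟨a, ha, h⟩ := h
  refine ⟨a, ha, ?_⟩
  rcases h with rfl | ⟨n, rfl⟩ <;> trivial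

theorem PosOcc.atomOcc {A : Formula} {m : Addr} (h : PosOcc A m) : AtomOcc A m := by
  obtain ⟨a, ha, h⟩ := h
  refine ⟨a, ha, ?_⟩
  rcases h with rfl | ⟨n, rfl⟩ <;> trivial

end Formula

/-- The sorts of links of an SMLL structure. -/
inductive LinkSort : Type
  | ax | cut | tens | parr | one | bot | sync
  deriving DecidableEq

/-- An SMLL proof-structure (with boxes): a finite directed multigraph whose
edges are typed by formulas and whose nodes are links.  Every edge is the
conclusion of exactly one link (its `src`); it is the premiss of the link
`tgt`, if any (edges with no target are the conclusions of the structure).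
`pIdx` indexes an edge among the premisses of its target (for `⊗`/`⅋`-links:
`0` = left, `1` = right; for sync links it pairs premisses with conclusions);
`cIdx` indexes an edge among the conclusions of its source (for sync links,
the `i`-th conclusion corresponds to the `i`-th premiss).  Each `bot`-link is
the lock of a box; `box n` is the innermost box containing the node `n` and
`boxes n` is the set of all boxes containing `n`. -/
structure Struct : Type 1 where
  Edge : Type
  Node : Type
  edgeFintype : Fintype Edge
  nodeFintype : Fintype Node
  edgeDecEq : DecidableEq Edge
  nodeDecEq : DecidableEq Node
  typ : Edge → Formula
  sort : Node → LinkSort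
  src : Edge → Node
  tgt : Edge → Option Node
  pIdx : Edge → ℕ
  cIdx : Edge → ℕ
  box : Node → Option Node
  boxes : Node → Finset Node

attribute [instance] Struct.edgeFintype Struct.nodeFintype
attribute [instance] Struct.edgeDecEq Struct.nodeDecEq

namespace Struct

variable (S : Struct)

/-- The conclusions of a link. -/
def concls (n : S.Node) : Finset S.Edge := Finset.univ.filter fun e => S.src e = n

/-- The premisses of a link. -/
def prems (n : S.Node) : Finset S.Edge := Finset.univ.filter fun e => S.tgt e = some n

/-- The conclusions of the structure. -/
def IsConcl (e : S.Edge) : Prop := S.tgt e = none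

/-- Well-formedness of an SMLL structure: the constraints that the sort of a
link induces on the number and the types of its premisses and conclusions,
together with the coherence of the nesting of boxes. -/
def WF : Prop :=
  (∀ n, S.sort n = .ax → S.prems n = ∅ ∧
    ∃ e f, e ≠ f ∧ S.concls n = {e, f} ∧ S.typ f = (S.typ e).dual) ∧
  (∀ n, S.sort n = .cut → S.concls n = ∅ ∧
    ∃ e f, e ≠ f ∧ S.prems n = {e, f} ∧ S.typ f = (S.typ e).dual) ∧
  (∀ n, S.sort n = .tens → ∃ e f g, e ≠ f ∧ S.prems n = {e, f} ∧
    S.pIdx e = 0 ∧ S.pIdx f = 1 ∧ S.concls n = {g} ∧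
    S.typ g = .tens (S.typ e) (S.typ f)) ∧
  (∀ n, S.sort n = .parr → ∃ e f g, e ≠ f ∧ S.prems n = {e, f} ∧
    S.pIdx e = 0 ∧ S.pIdx f = 1 ∧ S.concls n = {g} ∧
    S.typ g = .parr (S.typ e) (S.typ f)) ∧
  (∀ n, S.sort n = .one → S.prems n = ∅ ∧ ∃ e, S.concls n = {e} ∧ S.typ e = .one) ∧
  (∀ n, S.sort n = .bot → S.prems n = ∅ ∧ ∃ e, S.concls n = {e} ∧ S.typ e = .bot) ∧
  (∀ n, S.sort n = .sync →
    (∀ e ∈ S.prems n, (S.typ e).Polarized) ∧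
    (∀ e ∈ S.prems n, ∃! f, f ∈ S.concls n ∧ S.cIdx f = S.pIdx e) ∧
    (∀ f ∈ S.concls n, ∃! e, e ∈ S.prems n ∧ S.pIdx e = S.cIdx f) ∧
    (∀ e ∈ S.prems n, ∀ f ∈ S.concls n, S.cIdx f = S.pIdx e → S.typ f = S.typ e)) ∧
  (∀ n b, b ∈ S.boxes n → S.sort b = .bot) ∧
  (∀ n, S.box n = none → S.boxes n = ∅) ∧
  (∀ n b, S.box n = some b → b ∉ S.boxes b ∧ S.boxes n = insert b (S.boxes b)) ∧
  (∀ e n, S.tgt e = some n → S.boxes n ⊆ S.boxes (S.src e))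

/-- `b` is the representative of the node `m` in the level-`ℓ` graph (the
graph in which each box strictly below level `ℓ` is collapsed to a single
box-node, identified with its `bot`-link).  For `ℓ = none` this is the
`0`-graph. -/
def RepAt (ℓ : Option S.Node) (m b : S.Node) : Prop :=
  (S.box m = ℓ ∧ b = m) ∨ (b ∈ S.boxes m ∧ S.box b = ℓ)

/-- Edge `e` joins the nodes `u` and `v` (undirectedly) in the level-`ℓ` graph. -/
def ConnectsAt (ℓ : Option S.Node) (e : S.Edge) (u v : S.Node) : Prop :=
  ∃ t, S.tgt e = some t ∧ (S.box t = ℓ ∨ S.box (S.src e) = ℓ) ∧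
    ((S.RepAt ℓ (S.src e) u ∧ S.RepAt ℓ t v) ∨
     (S.RepAt ℓ (S.src e) v ∧ S.RepAt ℓ t u))

/-- The out-edges of a sync link are its positive conclusions and its negative
premisses. -/
def OutEdgeOf (l : S.Node) (e : S.Edge) : Prop :=
  S.sort l = .sync ∧
  ((S.src e = l ∧ (S.typ e).Positive) ∨ (S.tgt e = some l ∧ (S.typ e).Negative))

/-- There is a switching cycle in the level-`ℓ` graph: a cyclic undirected
simple path which uses at most one of the two premisses of each `⅋`-link and
at most one out-edge of each sync link. -/
def SwitchingCycleAt (ℓ : Option S.Node) : Prop :=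
  ∃ (k : ℕ) (v : Fin (k + 1) → S.Node) (e : Fin (k + 1) → S.Edge),
    Function.Injective v ∧ Function.Injective e ∧
    (∀ i, S.ConnectsAt ℓ (e i) (v i) (v (i + 1))) ∧
    (∀ p, S.sort p = .parr → Set.Subsingleton {i | S.tgt (e i) = some p}) ∧
    (∀ l, S.sort l = .sync → Set.Subsingleton {i | S.OutEdgeOf l (e i)})

/-- Correctness criterion: no switching cycle in the `0`-graph, and,
recursively, no switching cycle in the graph of the content of any box. -/
def Correct : Prop := ∀ ℓ : Option S.Node, ¬ S.SwitchingCycleAt ℓ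

/-- A net is a well-formed correct structure. -/
def IsNet : Prop := S.WF ∧ S.Correct

/-! ## Sync paths and hereditary conclusions -/

/-- One step of a sync path: entering a sync link on a premiss and coming out
on the corresponding conclusion. -/
def SyncStepE (e f : S.Edge) : Prop :=
  ∃ l, S.sort l = .sync ∧ S.tgt e = some l ∧ S.src f = l ∧ S.cIdx f = S.pIdx e

/-- `e` is a hereditary conclusion of the link `l`: there is a sync path from
a conclusion of `l` to `e`. -/
def HereditaryConcl (l : S.Node) (e : S.Edge) : Prop :=
  ∃ f, S.src f = l ∧ Relation.ReflTransGen S.SyncStepE f e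

/-- The edge emerges from a box: its source is a `bot`-link (the edge is the
lock of a box) or lies inside some box. -/
def FromBox (e : S.Edge) : Prop := S.sort (S.src e) = .bot ∨ S.box (S.src e) ≠ none

/-- `e` is a hereditary conclusion of a box. -/
def HereditaryBoxConcl (e : S.Edge) : Prop :=
  ∃ f, S.FromBox f ∧ Relation.ReflTransGen S.SyncStepE f e

/-- A ready cut: a cut at depth 0 neither of whose premisses is a hereditary
conclusion of a box. -/
def ReadyCut (c : S.Node) : Prop :=
  S.sort c = .cut ∧ S.box c = none ∧ ∀ e ∈ S.prems c, ¬ S.HereditaryBoxConcl e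

/-! ## Polarized paths and the order on links -/

/-- A node is polarized when all of its conclusions are polarized. -/
def PolarizedNode (n : S.Node) : Prop := ∀ e ∈ S.concls n, (S.typ e).Polarized

/-- A single step of a polarized path from link `a` to link `b` along the
polarized edge `e`: downwards on positive edges, upwards on negative edges,
connecting polarized nodes and never entering boxes. -/
def PolStep (e : S.Edge) (a b : S.Node) : Prop :=
  S.box a = none ∧ S.box b = none ∧ S.PolarizedNode a ∧ S.PolarizedNode b ∧
  (((S.typ e).Positive ∧ S.src e = a ∧ S.tgt e = some b) ∨
   ((S.typ e).Negative ∧ S.tgt e = some a ∧ S.src e = b))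

/-- `a ≺ b` : there is a (simple) polarized path from `a` to `b`. -/
def prec (a b : S.Node) : Prop :=
  ∃ (k : ℕ) (v : Fin (k + 2) → S.Node) (e : Fin (k + 1) → S.Edge),
    v 0 = a ∧ v (Fin.last _) = b ∧
    Function.Injective v ∧ Function.Injective e ∧
    ∀ i : Fin (k + 1), S.PolStep (e i) (v i.castSucc) (v i.succ)

/-- SMLL⁰ structures: no unit links (hence no boxes). -/
def UnitFree : Prop := ∀ n : S.Node, S.sort n ≠ .one ∧ S.sort n ≠ .bot

/-- Closed structures: no `⊥` occurs in the conclusions. -/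
def Closed : Prop := ∀ e : S.Edge, S.tgt e = none → (S.typ e).hasBotB = false

end Struct

/-! ## Reduction -/

/-- A partial injection `j` whose (some-)range is exactly `X`. -/
def PInjOnto {α β : Type*} (j : α → Option β) (X : Set β) : Prop :=
  (∀ a a' b, j a = some b → j a' = some b → a = a') ∧
  (∀ a b, j a = some b → b ∈ X) ∧
  (∀ b ∈ X, ∃ a, j a = some b)

/-- `j` is total. -/
def JTotal {α β : Type*} (j : α → Option β) : Prop := ∀ a, j a ≠ none

/-- The structures `Q` and `R` agree, along the correspondences `jN`, `jE`,
on all edges outside `XE` and all nodes outside `XN`. -/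
def AgreesOn (Q R : Struct) (jN : Q.Node → Option R.Node)
    (jE : Q.Edge → Option R.Edge) (XE : Set R.Edge) (XN : Set R.Node) : Prop :=
  (∀ x y, jE x = some y → y ∉ XE →
    Q.typ x = R.typ y ∧ jN (Q.src x) = some (R.src y) ∧
    (Q.tgt x).bind jN = R.tgt y ∧ Q.pIdx x = R.pIdx y ∧ Q.cIdx x = R.cIdx y) ∧
  (∀ n m, jN n = some m → m ∉ XN →
    Q.sort n = R.sort m ∧ (Q.box n).bind jN = R.box m ∧
    (∀ b b', jN b = some b' → (b ∈ Q.boxes n ↔ b' ∈ R.boxes m)))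

/-- The `ax/cut` step: a cut between a conclusion `v` of an axiom `a` and the
dual premiss is removed together with the axiom; the remaining conclusion `u`
of the axiom and the remaining premiss `q` of the cut are merged. -/
def AxCutStep (R Q : Struct) : Prop :=
  ∃ (a c : R.Node) (v u q : R.Edge),
    R.sort a = .ax ∧ R.sort c = .cut ∧ R.box a = none ∧ R.box c = none ∧
    v ≠ u ∧ v ≠ q ∧ u ≠ q ∧
    R.concls a = {v, u} ∧ R.prems c = {v, q} ∧
    ∃ (jN : Q.Node → Option R.Node) (jE : Q.Edge → Option R.Edge),
      JTotal jN ∧ JTotal jE ∧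
      PInjOnto jN {n | n ≠ a ∧ n ≠ c} ∧
      PInjOnto jE {x | x ≠ v ∧ x ≠ u} ∧
      AgreesOn Q R jN jE {q} ∅ ∧
      (∀ x, jE x = some q →
        Q.typ x = R.typ q ∧ jN (Q.src x) = some (R.src q) ∧
        (Q.tgt x).bind jN = R.tgt u ∧ Q.pIdx x = R.pIdx u ∧ Q.cIdx x = R.cIdx q)

/-- The `⊗/⅋` step: a cut between `A ⊗ B` and `A⊥ ⅋ B⊥` is replaced by two
cuts between the respective premisses. -/
def TensParrStep (R Q : Struct) : Prop :=
  ∃ (c t p : R.Node) (s s' a1 a2 b1 b2 : R.Edge),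
    R.sort c = .cut ∧ R.sort t = .tens ∧ R.sort p = .parr ∧
    R.box c = none ∧ R.box t = none ∧ R.box p = none ∧
    s ≠ s' ∧ R.prems c = {s, s'} ∧ R.concls t = {s} ∧ R.concls p = {s'} ∧
    a1 ≠ a2 ∧ R.prems t = {a1, a2} ∧ R.pIdx a1 = 0 ∧ R.pIdx a2 = 1 ∧
    b1 ≠ b2 ∧ R.prems p = {b1, b2} ∧ R.pIdx b1 = 0 ∧ R.pIdx b2 = 1 ∧
    ∃ (jN : Q.Node → Option R.Node) (jE : Q.Edge → Option R.Edge) (c' : Q.Node),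
      JTotal jE ∧
      PInjOnto jN {n | n ≠ t ∧ n ≠ p} ∧
      PInjOnto jE {x | x ≠ s ∧ x ≠ s'} ∧
      jN c' = none ∧ (∀ n, jN n = none → n = c') ∧
      Q.sort c' = .cut ∧ Q.box c' = none ∧ Q.boxes c' = ∅ ∧
      AgreesOn Q R jN jE {a1, a2, b1, b2} ∅ ∧
      (∀ x y, jE x = some y → y = a1 ∨ y = b1 →
        Q.typ x = R.typ y ∧ jN (Q.src x) = some (R.src y) ∧
        (Q.tgt x).bind jN = some c ∧ Q.cIdx x = R.cIdx y) ∧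
      (∀ x y, jE x = some y → y = a2 ∨ y = b2 →
        Q.typ x = R.typ y ∧ jN (Q.src x) = some (R.src y) ∧
        Q.tgt x = some c' ∧ Q.cIdx x = R.cIdx y)

/-- Commutation of a sync link with a `⊗` or `⅋` link: the sync link acting
on the conclusion `z` of the multiplicative link `m` (with corresponding sync
conclusion `w`) is pushed above `m`, now acting on the two premisses `x`, `y`
of `m` via two fresh sync positions (indices `i₁`, `i₂`) with fresh edges
`x'`, `y'`. -/
def SyncMultStep (R Q : Struct) : Prop :=
  ∃ (l m : R.Node) (z w x y : R.Edge) (i₁ i₂ : ℕ),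
    R.sort l = .sync ∧ (R.sort m = .tens ∨ R.sort m = .parr) ∧
    R.box l = none ∧ R.box m = none ∧
    R.src z = m ∧ R.tgt z = some l ∧ R.src w = l ∧ R.cIdx w = R.pIdx z ∧
    x ≠ y ∧ R.prems m = {x, y} ∧ R.pIdx x = 0 ∧ R.pIdx y = 1 ∧
    i₁ ≠ i₂ ∧
    (∀ e, R.tgt e = some l → R.pIdx e ≠ i₁ ∧ R.pIdx e ≠ i₂) ∧
    (∀ e, R.src e = l → R.cIdx e ≠ i₁ ∧ R.cIdx e ≠ i₂) ∧
    ∃ (jN : Q.Node → Option R.Node) (jE : Q.Edge → Option R.Edge)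
      (l' m' : Q.Node) (x' y' : Q.Edge),
      JTotal jN ∧ PInjOnto jN Set.univ ∧
      PInjOnto jE {e | e ≠ z} ∧
      jN l' = some l ∧ jN m' = some m ∧
      x' ≠ y' ∧ jE x' = none ∧ jE y' = none ∧ (∀ e, jE e = none → e = x' ∨ e = y') ∧
      AgreesOn Q R jN jE {x, y, w} ∅ ∧
      (∀ e, jE e = some x →
        Q.typ e = R.typ x ∧ jN (Q.src e) = some (R.src x) ∧
        Q.tgt e = some l' ∧ Q.pIdx e = i₁ ∧ Q.cIdx e = R.cIdx x) ∧
      (∀ e, jE e = some y →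
        Q.typ e = R.typ y ∧ jN (Q.src e) = some (R.src y) ∧
        Q.tgt e = some l' ∧ Q.pIdx e = i₂ ∧ Q.cIdx e = R.cIdx y) ∧
      (∀ e, jE e = some w →
        Q.typ e = R.typ w ∧ Q.src e = m' ∧
        (Q.tgt e).bind jN = R.tgt w ∧ Q.pIdx e = R.pIdx w ∧ Q.cIdx e = R.cIdx w) ∧
      (Q.typ x' = R.typ x ∧ Q.src x' = l' ∧ Q.tgt x' = some m' ∧
        Q.pIdx x' = 0 ∧ Q.cIdx x' = i₁) ∧
      (Q.typ y' = R.typ y ∧ Q.src y' = l' ∧ Q.tgt y' = some m' ∧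
        Q.pIdx y' = 1 ∧ Q.cIdx y' = i₂)

/-- Commutation of a sync link with an axiom: a sync link acting on a
positive conclusion `u` of an axiom (with corresponding conclusion `u'`) is
moved to the axiom's other conclusion `v` (of type `P⊥`), with a fresh sync
position of index `j` and fresh edge `v'`. -/
def SyncAxStep (R Q : Struct) : Prop :=
  ∃ (l a : R.Node) (u u' v : R.Edge) (j : ℕ),
    R.sort l = .sync ∧ R.sort a = .ax ∧ R.box l = none ∧ R.box a = none ∧
    (R.typ u).Positive ∧ u ≠ v ∧ R.concls a = {u, v} ∧
    R.tgt u = some l ∧ R.src u' = l ∧ R.cIdx u' = R.pIdx u ∧ u' ≠ u ∧ u' ≠ v ∧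
    (∀ e, R.tgt e = some l → R.pIdx e ≠ j) ∧
    (∀ e, R.src e = l → R.cIdx e ≠ j) ∧
    ∃ (jN : Q.Node → Option R.Node) (jE : Q.Edge → Option R.Edge)
      (l' a' : Q.Node) (v' : Q.Edge),
      JTotal jN ∧ PInjOnto jN Set.univ ∧ PInjOnto jE {e | e ≠ u} ∧
      jN l' = some l ∧ jN a' = some a ∧
      jE v' = none ∧ (∀ e, jE e = none → e = v') ∧
      AgreesOn Q R jN jE {u', v} ∅ ∧
      (∀ e, jE e = some u' →
        Q.typ e = R.typ u' ∧ Q.src e = a' ∧ Q.cIdx e = R.cIdx u ∧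
        (Q.tgt e).bind jN = R.tgt u' ∧ Q.pIdx e = R.pIdx u') ∧
      (∀ e, jE e = some v →
        Q.typ e = R.typ v ∧ Q.src e = a' ∧ Q.cIdx e = R.cIdx v ∧
        Q.tgt e = some l' ∧ Q.pIdx e = j) ∧
      (Q.typ v' = R.typ v ∧ Q.src v' = l' ∧ Q.cIdx v' = j ∧
        (Q.tgt v').bind jN = R.tgt v ∧ Q.pIdx v' = R.pIdx v)

/-- Commutation of a sync link with a cut: a sync link acting on the premiss
`d'` (of negative type `P⊥`) of a cut is moved to the other premiss `q`. -/
def SyncCutStep (R Q : Struct) : Prop :=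
  ∃ (l c : R.Node) (d d' q : R.Edge) (j : ℕ),
    R.sort l = .sync ∧ R.sort c = .cut ∧ R.box l = none ∧ R.box c = none ∧
    (R.typ d').Negative ∧
    R.src d' = l ∧ R.tgt d' = some c ∧ R.tgt d = some l ∧ R.pIdx d = R.cIdx d' ∧
    d' ≠ q ∧ d ≠ q ∧ d ≠ d' ∧ R.prems c = {d', q} ∧
    (∀ e, R.tgt e = some l → R.pIdx e ≠ j) ∧
    (∀ e, R.src e = l → R.cIdx e ≠ j) ∧
    ∃ (jN : Q.Node → Option R.Node) (jE : Q.Edge → Option R.Edge)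
      (l' c' : Q.Node) (q' : Q.Edge),
      JTotal jN ∧ PInjOnto jN Set.univ ∧ PInjOnto jE {e | e ≠ d'} ∧
      jN l' = some l ∧ jN c' = some c ∧
      jE q' = none ∧ (∀ e, jE e = none → e = q') ∧
      AgreesOn Q R jN jE {d, q} ∅ ∧
      (∀ e, jE e = some d →
        Q.typ e = R.typ d ∧ jN (Q.src e) = some (R.src d) ∧ Q.cIdx e = R.cIdx d ∧
        Q.tgt e = some c' ∧ Q.pIdx e = R.pIdx d') ∧
      (∀ e, jE e = some q →
        Q.typ e = R.typ q ∧ jN (Q.src e) = some (R.src q) ∧ Q.cIdx e = R.cIdx q ∧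
        Q.tgt e = some l' ∧ Q.pIdx e = j) ∧
      (Q.typ q' = R.typ q ∧ Q.src q' = l' ∧ Q.cIdx q' = j ∧
        Q.tgt q' = some c' ∧ Q.pIdx q' = R.pIdx q)

/-- Sync elimination: a sync link all of whose premisses are conclusions of
`one`-links is erased, merging each premiss with its corresponding
conclusion. -/
def SyncElimStep (R Q : Struct) : Prop :=
  ∃ l : R.Node, R.sort l = .sync ∧ R.box l = none ∧
    (∀ e ∈ R.prems l, R.sort (R.src e) = .one) ∧
    ∃ (jN : Q.Node → Option R.Node) (jE : Q.Edge → Option R.Edge),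
      JTotal jN ∧ JTotal jE ∧
      PInjOnto jN {n | n ≠ l} ∧
      PInjOnto jE {e | R.src e ≠ l} ∧
      AgreesOn Q R jN jE {e | R.tgt e = some l} ∅ ∧
      (∀ x e f, jE x = some e → R.tgt e = some l → R.src f = l →
        R.cIdx f = R.pIdx e →
        Q.typ x = R.typ e ∧ jN (Q.src x) = some (R.src e) ∧
        (Q.tgt x).bind jN = R.tgt f ∧ Q.pIdx x = R.pIdx f ∧ Q.cIdx x = R.cIdx e)

/-- The `one/⊥` step (box opening): a cut between the conclusion `o` of a
`one`-link `n₁` and the lock `k` of a box `b` removes the cut, the `one`-link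
and the `bot`-link, and opens the box. -/
def OneBotStep (R Q : Struct) : Prop :=
  ∃ (c n₁ b : R.Node) (o k : R.Edge),
    R.sort c = .cut ∧ R.sort n₁ = .one ∧ R.sort b = .bot ∧
    R.box c = none ∧ R.box n₁ = none ∧ R.box b = none ∧
    o ≠ k ∧ R.prems c = {o, k} ∧ R.src o = n₁ ∧ R.src k = b ∧
    ∃ (jN : Q.Node → Option R.Node) (jE : Q.Edge → Option R.Edge),
      JTotal jN ∧ JTotal jE ∧
      PInjOnto jN {n | n ≠ c ∧ n ≠ n₁ ∧ n ≠ b} ∧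
      PInjOnto jE {e | e ≠ o ∧ e ≠ k} ∧
      (∀ x e, jE x = some e →
        Q.typ x = R.typ e ∧ jN (Q.src x) = some (R.src e) ∧
        (Q.tgt x).bind jN = R.tgt e ∧ Q.pIdx x = R.pIdx e ∧ Q.cIdx x = R.cIdx e) ∧
      (∀ n m, jN n = some m →
        Q.sort n = R.sort m ∧
        (∀ b₀ b₀', jN b₀ = some b₀' → (b₀ ∈ Q.boxes n ↔ b₀' ∈ R.boxes m ∧ b₀' ≠ b)) ∧
        (R.box m = some b → Q.box n = none) ∧
        (R.box m ≠ some b → (Q.box n).bind jN = R.box m))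

/-- The sync-commutation and sync-elimination steps. -/
def SyncRed (R Q : Struct) : Prop :=
  SyncMultStep R Q ∨ SyncAxStep R Q ∨ SyncCutStep R Q ∨ SyncElimStep R Q

/-- The reduction relation `→` on SMLL structures (applied at depth 0 only). -/
def Step (R Q : Struct) : Prop :=
  AxCutStep R Q ∨ TensParrStep R Q ∨ SyncRed R Q ∨ OneBotStep R Q

/-- Isomorphism of structures. -/
def Isom (R Q : Struct) : Prop :=
  ∃ (en : R.Node ≃ Q.Node) (ee : R.Edge ≃ Q.Edge),
    (∀ e, Q.typ (ee e) = R.typ e) ∧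
    (∀ e, Q.src (ee e) = en (R.src e)) ∧
    (∀ e, Q.tgt (ee e) = (R.tgt e).map en) ∧
    (∀ e, Q.pIdx (ee e) = R.pIdx e) ∧
    (∀ e, Q.cIdx (ee e) = R.cIdx e) ∧
    (∀ n, Q.sort (en n) = R.sort n) ∧
    (∀ n, Q.box (en n) = (R.box n).map en) ∧
    (∀ n, Q.boxes (en n) = (R.boxes n).image en)

/-! ## The SIAM: a synchronous interaction abstract machine -/

namespace Struct

variable (S : Struct)

/-- The value of a token: either an occurrence of an atom on an edge, or a
position `(e, i)` on the lock `e` of a box (`BOTBOX`). -/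
inductive PosVal (S : Struct) : Type
  | atom : S.Edge → Formula.Addr → PosVal S
  | lock : S.Edge → ℕ → PosVal S

/-- Initial positions: negative atom occurrences in the conclusions. -/
def InitPos (p : S.Edge × Formula.Addr) : Prop :=
  S.tgt p.1 = none ∧ Formula.NegOcc (S.typ p.1) p.2

/-- Final positions: positive atom occurrences in the conclusions. -/
def FinPos (p : S.Edge × Formula.Addr) : Prop :=
  S.tgt p.1 = none ∧ Formula.PosOcc (S.typ p.1) p.2

/-- One positions: conclusions of `one`-links. -/
def OnePos (p : S.Edge × Formula.Addr) : Prop :=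
  S.sort (S.src p.1) = .one ∧ p.2 = []

/-- Valid token values: genuine atom occurrences, or positions on the lock of
a box. -/
def ValidVal : PosVal S → Prop
  | .atom e m => Formula.AtomOcc (S.typ e) m
  | .lock e _ => S.sort (S.src e) = .bot

end Struct

/-- A state of the SIAM machine `M_S`: a (partial) function from
`INIT(S) ∪ L` (with `L ⊆ ONES(S)`) to the positions of `S`; it records, for
each token, its origin and its current position. -/
structure SState (S : Struct) where
  f : S.Edge × Formula.Addr → Option (Struct.PosVal S)
  dom_subset : ∀ p, f p ≠ none → S.InitPos p ∨ S.OnePos p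
  init_total : ∀ p, S.InitPos p → f p ≠ none
  val_valid : ∀ p v, f p = some v → S.ValidVal v

namespace Struct

variable (S : Struct)

/-- The box `b` is unlocked in state `T`: some token sits on its lock. -/
def Unlocked (T : SState S) (b : S.Node) : Prop :=
  ∃ p e i, T.f p = some (.lock e i) ∧ S.src e = b

/-- A link is active: all the boxes containing it are unlocked. -/
def Active (T : SState S) (n : S.Node) : Prop :=
  ∀ b ∈ S.boxes n, S.Unlocked T b

end Struct

open Classical in
/-- The initial state `I_S`: the identity on the initial positions. -/
noncomputable def initState (S : Struct) : SState S where
  f := fun p => if S.InitPos p then some (.atom p.1 p.2) else none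
  dom_subset := by
    intro p hp
    by_cases h : S.InitPos p
    · exact Or.inl h
    · simp [h] at hp
  init_total := by intro p hp; simp [hp]
  val_valid := by
    intro p v hv
    by_cases h : S.InitPos p
    · simp only [if_pos h, Option.some.injEq] at hv
      subst hv
      exact h.2.atomOcc
    · simp [h] at hv

/-- The transition relation of the SIAM.  Tokens on negative atom occurrences
move upwards, tokens on positive atom occurrences move downwards; all tokens
cross a sync link simultaneously, when each of its in-edges is saturated;
active `one`-links may spawn a token; a token reaching the lock of a box
unlocks it.  Tokens may only cross active links (so they can enter a box only
when it is unlocked). -/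
inductive STrans (S : Struct) : SState S → SState S → Prop
  | axUp {T T' : SState S} {p : S.Edge × Formula.Addr} {e e' : S.Edge}
      {m : Formula.Addr} {a : S.Node} :
      T.f p = some (.atom e m) →
      Formula.NegOcc (S.typ e) m →
      S.src e = a → S.sort a = .ax → S.Active T a →
      S.src e' = a → e' ≠ e →
      (∀ q, q ≠ p → T'.f q = T.f q) →
      T'.f p = some (.atom e' m) →
      STrans S T T'
  | cutDown {T T' : SState S} {p : S.Edge × Formula.Addr} {e e' : S.Edge}
      {m : Formula.Addr} {c : S.Node} :
      T.f p = some (.atom e m) →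
      Formula.PosOcc (S.typ e) m →
      S.tgt e = some c → S.sort c = .cut → S.Active T c →
      S.tgt e' = some c → e' ≠ e →
      (∀ q, q ≠ p → T'.f q = T.f q) →
      T'.f p = some (.atom e' m) →
      STrans S T T'
  | multDown {T T' : SState S} {p : S.Edge × Formula.Addr} {e g : S.Edge}
      {m : Formula.Addr} {n : S.Node} {b : Bool} :
      T.f p = some (.atom e m) →
      Formula.PosOcc (S.typ e) m →
      S.tgt e = some n → (S.sort n = .tens ∨ S.sort n = .parr) → S.Active T n →
      S.src g = n →
      S.pIdx e = (if b then 1 else 0) →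
      (∀ q, q ≠ p → T'.f q = T.f q) →
      T'.f p = some (.atom g (b :: m)) →
      STrans S T T'
  | multUp {T T' : SState S} {p : S.Edge × Formula.Addr} {e g : S.Edge}
      {m : Formula.Addr} {n : S.Node} {b : Bool} :
      T.f p = some (.atom g (b :: m)) →
      Formula.NegOcc (S.typ g) (b :: m) →
      S.src g = n → (S.sort n = .tens ∨ S.sort n = .parr) → S.Active T n →
      S.tgt e = some n →
      S.pIdx e = (if b then 1 else 0) →
      (∀ q, q ≠ p → T'.f q = T.f q) →
      T'.f p = some (.atom e m) →
      STrans S T T'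
  | lockTok {T T' : SState S} {p : S.Edge × Formula.Addr} {e : S.Edge}
      {b' : S.Node} :
      T.f p = some (.atom e []) →
      S.typ e = .bot →
      S.src e = b' → S.sort b' = .bot → S.Active T b' →
      (∀ q, q ≠ p → T'.f q = T.f q) →
      T'.f p = some (.lock e 0) →
      STrans S T T'
  | oneSpawn {T T' : SState S} {n : S.Node} {e : S.Edge} :
      S.sort n = .one → S.Active T n → S.src e = n →
      T.f (e, []) = none →
      (∀ q, q ≠ (e, []) → T'.f q = T.f q) →
      T'.f (e, []) = some (.atom e []) →
      STrans S T T'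
  | syncCross {T T' : SState S} {l : S.Node} :
      S.sort l = .sync → S.Active T l →
      (∃ q e m, T.f q = some (.atom e m) ∧
        ((S.tgt e = some l ∧ (S.typ e).Positive) ∨
         (S.src e = l ∧ (S.typ e).Negative))) →
      (∀ e, ((S.tgt e = some l ∧ (S.typ e).Positive) ∨
             (S.src e = l ∧ (S.typ e).Negative)) →
        ∀ m, Formula.AtomOcc (S.typ e) m → ∃ q, T.f q = some (.atom e m)) →
      (∀ q e m, T.f q = some (.atom e m) → S.tgt e = some l → (S.typ e).Positive →
        ∃ e', S.src e' = l ∧ S.cIdx e' = S.pIdx e ∧ T'.f q = some (.atom e' m)) →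
      (∀ q e m, T.f q = some (.atom e m) → S.src e = l → (S.typ e).Negative →
        ∃ e', S.tgt e' = some l ∧ S.pIdx e' = S.cIdx e ∧ T'.f q = some (.atom e' m)) →
      (∀ q, (∀ e m, T.f q = some (.atom e m) →
          ¬(S.tgt e = some l ∧ (S.typ e).Positive) ∧
          ¬(S.src e = l ∧ (S.typ e).Negative)) →
        T'.f q = T.f q) →
      STrans S T T'

/-- A final state: its image consists of all the final positions together
with positions on the locks of boxes. -/
def SState.Final {S : Struct} (T : SState S) : Prop :=
  (∀ q v, T.f q = some v →
    (∃ e m, v = .atom e m ∧ S.FinPos (e, m)) ∨ (∃ e i, v = .lock e i)) ∧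
  (∀ e m, S.FinPos (e, m) → ∃ q, T.f q = some (.atom e m))

/-- The machine of `S` deadlocks: some maximal transition sequence from the
initial state ends in a non-final state. -/
def Deadlocks (S : Struct) : Prop :=
  ∃ T : SState S, Relation.ReflTransGen (STrans S) (initState S) T ∧
    (∀ T', ¬ STrans S T T') ∧ ¬ T.Final

/-- The machine of `S` is deadlock free: every maximal transition sequence
from the initial state ends in a final state. -/
def DeadlockFree (S : Struct) : Prop :=
  ∀ T : SState S, Relation.ReflTransGen (STrans S) (initState S) T →
    (∀ T', ¬ STrans S T T') → T.Final

/-! ## The closure of a net -/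

/-- A structure with a designated (main) conclusion. -/
structure PNet : Type 1 where
  S : Struct
  main : S.Edge

/-- The net consisting of a single `one`-link. -/
def oneNet : PNet where
  S :=
    { Edge := Unit
      Node := Unit
      edgeFintype := inferInstance
      nodeFintype := inferInstance
      edgeDecEq := inferInstance
      nodeDecEq := inferInstance
      typ := fun _ => .one
      sort := fun _ => .one
      src := fun _ => ()
      tgt := fun _ => none
      pIdx := fun _ => 0
      cIdx := fun _ => 0
      box := fun _ => none
      boxes := fun _ => ∅ }
  main := ()

/-- The net consisting of a single axiom of conclusions `A⊥, A`, with main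
conclusion `A`. -/
def axNet (A : Formula) : PNet where
  S :=
    { Edge := Bool
      Node := Unit
      edgeFintype := inferInstance
      nodeFintype := inferInstance
      edgeDecEq := inferInstance
      nodeDecEq := inferInstance
      typ := fun e => if e then A else A.dual
      sort := fun _ => .ax
      src := fun _ => ()
      tgt := fun _ => none
      pIdx := fun _ => 0
      cIdx := fun e => if e then 1 else 0
      box := fun _ => none
      boxes := fun _ => ∅ }
  main := true

/-- Joining the main conclusions of two nets by a binary link of sort `s`
and conclusion type `C`. -/
def joinNet (s : LinkSort) (C : Formula) (P Q : PNet) : PNet where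
  S :=
    { Edge := Option (P.S.Edge ⊕ Q.S.Edge)
      Node := Option (P.S.Node ⊕ Q.S.Node)
      edgeFintype := inferInstance
      nodeFintype := inferInstance
      edgeDecEq := inferInstance
      nodeDecEq := inferInstance
      typ := fun e =>
        match e with
        | none => C
        | some (.inl x) => P.S.typ x
        | some (.inr y) => Q.S.typ y
      sort := fun n =>
        match n with
        | none => s
        | some (.inl x) => P.S.sort x
        | some (.inr y) => Q.S.sort y
      src := fun e =>
        match e with
        | none => none
        | some (.inl x) => some (.inl (P.S.src x))
        | some (.inr y) => some (.inr (Q.S.src y))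
      tgt := fun e =>
        match e with
        | none => none
        | some (.inl x) =>
            if x = P.main then some none
            else (P.S.tgt x).map fun n => some (.inl n)
        | some (.inr y) =>
            if y = Q.main then some none
            else (Q.S.tgt y).map fun n => some (.inr n)
      pIdx := fun e =>
        match e with
        | none => 0
        | some (.inl x) => if x = P.main then 0 else P.S.pIdx x
        | some (.inr y) => if y = Q.main then 1 else Q.S.pIdx y
      cIdx := fun e =>
        match e with
        | none => 0
        | some (.inl x) => P.S.cIdx x
        | some (.inr y) => Q.S.cIdx y
      box := fun n =>
        match n with
        | none => none
        | some (.inl x) => (P.S.box x).map fun m => some (.inl m)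
        | some (.inr y) => (Q.S.box y).map fun m => some (.inr m)
      boxes := fun n =>
        match n with
        | none => ∅
        | some (.inl x) => (P.S.boxes x).image fun m => some (.inl m)
        | some (.inr y) => (Q.S.boxes y).image fun m => some (.inr m) }
  main := none

/-- The net `R°(A)`, by induction on `A`: it has conclusions `Γ, A` with no
occurrence of `⊥` in `Γ`, and main conclusion `A`. -/
def circNet : Formula → PNet
  | .one => oneNet
  | .bot => axNet .bot
  | .var n => axNet (.var n)
  | .covar n => axNet (.covar n)
  | .tens A B => joinNet .tens (.tens A B) (circNet A) (circNet B)
  | .parr A B => joinNet .parr (.parr A B) (circNet A) (circNet B)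

/-- The conclusions of `R` containing an occurrence of `⊥`. -/
abbrev BadC (R : Struct) :=
  {e : R.Edge // R.tgt e = none ∧ (R.typ e).hasBotB = true}

/-- The closure `R̂` of `R`: each conclusion `A` of `R` containing `⊥` is cut
against the main conclusion of a copy of `R°(A⊥)`. -/
def netClosure (R : Struct) : Struct where
  Edge := R.Edge ⊕ Σ e : BadC R, (circNet (R.typ e.val).dual).S.Edge
  Node := R.Node ⊕ ((Σ e : BadC R, (circNet (R.typ e.val).dual).S.Node) ⊕ BadC R)
  edgeFintype := inferInstance
  nodeFintype := inferInstance
  edgeDecEq := inferInstance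
  nodeDecEq := inferInstance
  typ := fun e =>
    match e with
    | .inl e => R.typ e
    | .inr ⟨b, x⟩ => (circNet (R.typ b.val).dual).S.typ x
  sort := fun n =>
    match n with
    | .inl n => R.sort n
    | .inr (.inl ⟨b, x⟩) => (circNet (R.typ b.val).dual).S.sort x
    | .inr (.inr _) => .cut
  src := fun e =>
    match e with
    | .inl e => .inl (R.src e)
    | .inr ⟨b, x⟩ => .inr (.inl ⟨b, (circNet (R.typ b.val).dual).S.src x⟩)
  tgt := fun e =>
    match e with
    | .inl e =>
        if h : R.tgt e = none ∧ (R.typ e).hasBotB = true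
        then some (.inr (.inr ⟨e, h⟩))
        else (R.tgt e).map Sum.inl
    | .inr ⟨b, x⟩ =>
        if x = (circNet (R.typ b.val).dual).main
        then some (.inr (.inr b))
        else ((circNet (R.typ b.val).dual).S.tgt x).map fun n => .inr (.inl ⟨b, n⟩)
  pIdx := fun e =>
    match e with
    | .inl e => R.pIdx e
    | .inr ⟨b, x⟩ =>
        if x = (circNet (R.typ b.val).dual).main then 1
        else (circNet (R.typ b.val).dual).S.pIdx x
  cIdx := fun e =>
    match e with
    | .inl e => R.cIdx e
    | .inr ⟨b, x⟩ => (circNet (R.typ b.val).dual).S.cIdx x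
  box := fun n =>
    match n with
    | .inl n => (R.box n).map Sum.inl
    | .inr (.inl ⟨b, x⟩) =>
        ((circNet (R.typ b.val).dual).S.box x).map fun m => .inr (.inl ⟨b, m⟩)
    | .inr (.inr _) => none
  boxes := fun n =>
    match n with
    | .inl n => (R.boxes n).image Sum.inl
    | .inr (.inl ⟨b, x⟩) =>
        ((circNet (R.typ b.val).dual).S.boxes x).image fun m => .inr (.inl ⟨b, m⟩)
    | .inr (.inr _) => ∅


namespace Formula

theorem sub_append (A : Formula) (m k : Addr) :
    sub A (m ++ k) = (sub A m).bind fun a => sub a k := by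
  induction m generalizing A with
  | nil => cases A <;> simp [sub]
  | cons b m ih => cases A <;> cases b <;> simp [sub, ih]

theorem sub_nil (A : Formula) : sub A [] = some A := by cases A <;> rfl

theorem dual_dual (A : Formula) : A.dual.dual = A := by
  induction A <;> simp_all [dual]

theorem sub_dual (A : Formula) (m : Addr) : sub A.dual m = (sub A m).map dual := by
  induction m generalizing A with
  | nil => simp [sub_nil]
  | cons b m ih => cases A <;> cases b <;> simp [sub, dual, ih]

theorem sub_atom {a : Formula} (h : IsAtom a) {m : Addr} {c : Formula}
    (hs : sub a m = some c) : m = [] := by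
  cases m with
  | nil => rfl
  | cons b m => cases a <;> simp_all [sub, IsAtom]

theorem isAtom_dual {a : Formula} (h : IsAtom a) : IsAtom a.dual := by
  cases a <;> simp_all [dual, IsAtom]

theorem posOcc_of_sub_eq {A B : Formula} {m k : Addr} (h : sub A m = sub B k) :
    PosOcc A m ↔ PosOcc B k := by simp [PosOcc, h]

theorem negOcc_of_sub_eq {A B : Formula} {m k : Addr} (h : sub A m = sub B k) :
    NegOcc A m ↔ NegOcc B k := by simp [NegOcc, h]

theorem atomOcc_of_sub_eq {A B : Formula} {m k : Addr} (h : sub A m = sub B k) :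
    AtomOcc A m ↔ AtomOcc B k := by simp [AtomOcc, h]

theorem not_pos_neg {A : Formula} {m : Addr} (h : PosOcc A m) (h' : NegOcc A m) : False := by
  obtain ⟨a, ha, h⟩ := h
  obtain ⟨b, hb, h'⟩ := h'
  have : a = b := by rw [ha] at hb; exact Option.some.inj hb
  subst this
  rcases h with rfl | ⟨n, rfl⟩ <;> simp at h'

theorem pos_or_neg {A : Formula} {m : Addr} (h : AtomOcc A m) : PosOcc A m ∨ NegOcc A m := by
  obtain ⟨a, ha, h⟩ := h
  cases a <;> simp_all [PosOcc, NegOcc, IsAtom]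

theorem posOcc_dual (A : Formula) (m : Addr) : PosOcc A.dual m ↔ NegOcc A m := by
  simp only [PosOcc, NegOcc, sub_dual]
  rcases sub A m with _ | a
  · simp
  · cases a <;> simp [dual]

theorem negOcc_dual (A : Formula) (m : Addr) : NegOcc A.dual m ↔ PosOcc A m := by
  rw [← posOcc_dual, dual_dual]

theorem atomOcc_dual (A : Formula) (m : Addr) : AtomOcc A.dual m ↔ AtomOcc A m := by
  constructor
  · intro h
    rcases pos_or_neg h with h | h
    · exact ((posOcc_dual _ _).1 h).atomOcc
    · exact ((negOcc_dual _ _).1 h).atomOcc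
  · intro h
    rcases pos_or_neg h with h | h
    · exact ((negOcc_dual _ _).2 h).atomOcc
    · exact ((posOcc_dual _ _).2 h).atomOcc

theorem Positive.posOcc {A : Formula} (h : Positive A) : ∀ {m : Addr}, AtomOcc A m → PosOcc A m := by
  induction h with
  | one => rintro (_ | ⟨_, _⟩) ⟨a, ha, _⟩ <;> simp_all [sub, PosOcc]
  | tens _ _ ih1 ih2 =>
    rintro (_ | ⟨_ | _, m⟩) ⟨a, ha, h⟩
    · simp only [sub, Option.some.injEq] at ha; subst ha; exact h.elim
    · exact ih1 ⟨a, ha, h⟩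
    · exact ih2 ⟨a, ha, h⟩

theorem Negative.negOcc {A : Formula} (h : Negative A) : ∀ {m : Addr}, AtomOcc A m → NegOcc A m := by
  induction h with
  | bot => rintro (_ | ⟨_, _⟩) ⟨a, ha, _⟩ <;> simp_all [sub, NegOcc]
  | parr _ _ ih1 ih2 =>
    rintro (_ | ⟨_ | _, m⟩) ⟨a, ha, h⟩
    · simp only [sub, Option.some.injEq] at ha; subst ha; exact h.elim
    · exact ih1 ⟨a, ha, h⟩
    · exact ih2 ⟨a, ha, h⟩

theorem finite_sub (A : Formula) : {m : Addr | sub A m ≠ none}.Finite := by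
  have atomic : ∀ a : Formula, IsAtom a → {m : Addr | sub a m ≠ none}.Finite := by
    intro a ha
    refine (Set.finite_singleton ([] : Addr)).subset ?_
    intro m hm
    obtain ⟨c, hc⟩ := Option.ne_none_iff_exists'.1 hm
    exact sub_atom ha hc
  have bin : ∀ C A B : Formula, (∀ m, sub C (false :: m) = sub A m) →
      (∀ m, sub C (true :: m) = sub B m) →
      {m : Addr | sub A m ≠ none}.Finite → {m : Addr | sub B m ≠ none}.Finite →
      {m : Addr | sub C m ≠ none}.Finite := by
    intro C A B h1 h2 f1 f2
    refine ((Set.finite_singleton ([] : Addr)).union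
      ((f1.image (List.cons false)).union (f2.image (List.cons true)))).subset ?_
    rintro (_ | ⟨_ | _, m⟩) hm
    · left; rfl
    · right; left; exact ⟨m, by simpa [h1] using hm, rfl⟩
    · right; right; exact ⟨m, by simpa [h2] using hm, rfl⟩
  induction A with
  | one => exact atomic _ trivial
  | bot => exact atomic _ trivial
  | var n => exact atomic _ trivial
  | covar n => exact atomic _ trivial
  | tens A B iA iB => exact bin _ A B (fun _ => rfl) (fun _ => rfl) iA iB
  | parr A B iA iB => exact bin _ A B (fun _ => rfl) (fun _ => rfl) iA iB

end Formula

open Formula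

/-- Combinatorial description of the nets `R°(B)`. -/
structure CircData (P : PNet) (B : Formula) where
  addr : P.S.Edge → Addr
  side : P.S.Edge → Bool
  inj : ∀ x y, addr x = addr y → side x = side y → x = y
  boxes : ∀ n, P.S.boxes n = ∅
  sorts : ∀ n, P.S.sort n = .ax ∨ P.S.sort n = .tens ∨ P.S.sort n = .parr ∨ P.S.sort n = .one
  main_addr : addr P.main = []
  main_side : side P.main = false
  typ_ns : ∀ x, side x = false → sub B (addr x) = some (P.S.typ x)
  typ_s : ∀ x, side x = true → ∃ a, IsAtom a ∧ a ≠ .one ∧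
    sub B (addr x) = some a ∧ P.S.typ x = a.dual
  tgt_none : ∀ x, P.S.tgt x = none ↔ x = P.main ∨ side x = true
  ax : ∀ x y, P.S.src x = P.S.src y → P.S.sort (P.S.src x) = .ax → x ≠ y →
    addr x = addr y ∧ side y = !side x
  ax_ex : ∀ x, P.S.sort (P.S.src x) = .ax → ∃ y, y ≠ x ∧ P.S.src y = P.S.src x
  side_ax : ∀ x, side x = true → P.S.sort (P.S.src x) = .ax
  one : ∀ x, P.S.sort (P.S.src x) = .one → side x = false ∧ P.S.typ x = .one
  mult : ∀ x g, P.S.tgt x = some (P.S.src g) → ∃ b : Bool,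
    P.S.pIdx x = (if b then 1 else 0) ∧ addr x = addr g ++ [b] ∧ side g = false
  tgt_mult : ∀ x n, P.S.tgt x = some n →
    (P.S.sort n = .tens ∨ P.S.sort n = .parr) ∧ ∃ g, P.S.src g = n
  up : ∀ x (b : Bool) m, side x = false → sub (P.S.typ x) (b :: m) ≠ none →
    (P.S.sort (P.S.src x) = .tens ∨ P.S.sort (P.S.src x) = .parr) ∧
    ∃ y, P.S.tgt y = some (P.S.src x) ∧ P.S.pIdx y = (if b then 1 else 0)
  leaf : ∀ x, side x = false → NegOcc (P.S.typ x) [] → P.S.sort (P.S.src x) = .ax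
  ex_one : ∀ m, sub B m = some .one →
    ∃ x, addr x = m ∧ side x = false ∧ P.S.sort (P.S.src x) = .one
  ex_side : ∀ m a, sub B m = some a → IsAtom a → a ≠ .one → ∃ x, addr x = m ∧ side x = true

def circOne : CircData oneNet .one where
  addr _ := []
  side _ := false
  inj _ _ _ _ := rfl
  boxes _ := rfl
  sorts _ := by simp [oneNet]
  main_addr := rfl
  main_side := rfl
  typ_ns _ _ := rfl
  typ_s _ h := by simp at h
  tgt_none x := ⟨fun _ => Or.inl rfl, fun _ => rfl⟩
  ax x y _ _ h := (h rfl).elim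
  ax_ex x h := by simp [oneNet] at h
  side_ax x h := by simp at h
  one x h := ⟨rfl, rfl⟩
  mult x g h := by simp [oneNet] at h
  tgt_mult x n h := by simp [oneNet] at h
  up x b m _ h := by simp [oneNet, sub] at h
  leaf x _ h := by simp [oneNet, sub, NegOcc] at h
  ex_one m h := ⟨(), (sub_atom (a := .one) trivial h).symm, rfl, rfl⟩
  ex_side m a h _ h' := by
    obtain rfl := sub_atom (a := .one) trivial h
    simp [sub] at h; exact (h' h.symm).elim

def circAx (A : Formula) (hA : IsAtom A) (h1 : A ≠ .one) : CircData (axNet A) A where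
  addr _ := []
  side e := !(show Bool from e)
  inj x y _ h := Bool.not_inj h
  boxes _ := rfl
  sorts _ := by simp [axNet]
  main_addr := rfl
  main_side := rfl
  typ_ns x h := by
    change Bool at x
    cases x
    · simp at h
    · simp [sub_nil, axNet]
  typ_s x h := by
    change Bool at x
    cases x
    · exact ⟨A, hA, h1, sub_nil A, by simp [axNet]⟩
    · simp at h
  tgt_none x := by
    change Bool at x
    cases x <;> simp [axNet]
  ax x y _ _ h := by
    change Bool at x y
    refine ⟨rfl, ?_⟩
    cases x <;> cases y <;> simp_all
  ax_ex x h := by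
    change Bool at x
    exact ⟨(!x : Bool), Bool.not_ne_self x, rfl⟩
  side_ax x h := rfl
  one x h := by simp [axNet] at h
  mult x g h := by simp [axNet] at h
  tgt_mult x n h := by simp [axNet] at h
  up x b m h h' := by
    change Bool at x
    cases x
    · simp at h
    · obtain ⟨c, hc⟩ := Option.ne_none_iff_exists'.1 h'
      have := sub_atom (a := A) hA (by simpa [axNet] using hc)
      simp at this
  leaf x h h' := rfl
  ex_one m h := by
    obtain rfl := sub_atom hA h
    rw [sub_nil] at h
    exact (h1 (Option.some.inj h)).elim
  ex_side m a h _ h' := ⟨(false : Bool), (sub_atom hA h).symm, rfl⟩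

def circJoin (s : LinkSort) (C A B : Formula) (P Q : PNet) (p : CircData P A) (q : CircData Q B)
    (hs : (s = .tens ∧ C = .tens A B) ∨ (s = .parr ∧ C = .parr A B)) :
    CircData (joinNet s C P Q) C where
  addr e := match e with
    | none => []
    | some (.inl x) => false :: p.addr x
    | some (.inr x) => true :: q.addr x
  side e := match e with
    | none => false
    | some (.inl x) => p.side x
    | some (.inr x) => q.side x
  inj x y := by
    have := p.inj
    have := q.inj
    rcases x with _ | x | x <;> rcases y with _ | y | y <;> simp <;> grind
  boxes n := by
    rcases n with _ | n | n
    · rfl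
    · exact Finset.image_eq_empty.2 (p.boxes n)
    · exact Finset.image_eq_empty.2 (q.boxes n)
  sorts n := by
    rcases n with _ | n | n
    · rcases hs with ⟨rfl, rfl⟩ | ⟨rfl, rfl⟩ <;> simp [joinNet]
    · exact p.sorts n
    · exact q.sorts n
  main_addr := rfl
  main_side := rfl
  typ_ns x h := by
    rcases x with _ | x | x
    · exact sub_nil C
    · have := p.typ_ns x h
      rcases hs with ⟨rfl, rfl⟩ | ⟨rfl, rfl⟩ <;> exact this
    · have := q.typ_ns x h
      rcases hs with ⟨rfl, rfl⟩ | ⟨rfl, rfl⟩ <;> exact this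
  typ_s x h := by
    rcases x with _ | x | x
    · simp at h
    · have := p.typ_s x h
      rcases hs with ⟨rfl, rfl⟩ | ⟨rfl, rfl⟩ <;> exact this
    · have := q.typ_s x h
      rcases hs with ⟨rfl, rfl⟩ | ⟨rfl, rfl⟩ <;> exact this
  tgt_none x := by
    rcases x with _ | x | x
    · simp [joinNet]
    · have := p.tgt_none x
      have := p.main_side
      by_cases h : x = P.main <;> simp_all [joinNet]
    · have := q.tgt_none x
      have := q.main_side
      by_cases h : x = Q.main <;> simp_all [joinNet]
  ax x y h h' hne := by
    rcases x with _ | x | x <;> rcases y with _ | y | y <;> simp [joinNet] at h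
    · exact (hne rfl).elim
    · have := p.ax x y h h' (fun e => hne (by rw [e]))
      exact ⟨by simp [this.1], this.2⟩
    · have := q.ax x y h h' (fun e => hne (by rw [e]))
      exact ⟨by simp [this.1], this.2⟩
  ax_ex x h := by
    rcases x with _ | x | x
    · rcases hs with ⟨rfl, rfl⟩ | ⟨rfl, rfl⟩ <;> simp [joinNet] at h
    · obtain ⟨y, h1, h2⟩ := p.ax_ex x h
      exact ⟨some (.inl y), fun e => h1 (Sum.inl.inj (Option.some.inj e)), by simp [joinNet, h2]⟩
    · obtain ⟨y, h1, h2⟩ := q.ax_ex x h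
      exact ⟨some (.inr y), fun e => h1 (Sum.inr.inj (Option.some.inj e)), by simp [joinNet, h2]⟩
  side_ax x h := by
    rcases x with _ | x | x
    · simp at h
    · exact p.side_ax x h
    · exact q.side_ax x h
  one x h := by
    rcases x with _ | x | x
    · rcases hs with ⟨rfl, rfl⟩ | ⟨rfl, rfl⟩ <;> simp [joinNet] at h
    · exact p.one x h
    · exact q.one x h
  mult x g h := by
    rcases x with _ | x | x
    · simp [joinNet] at h
    · by_cases hx : x = P.main
      · rcases g with _ | g | g
        · exact ⟨false, by simp [joinNet, hx], by simp [hx, p.main_addr], rfl⟩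
        · simp [joinNet, hx] at h
        · simp [joinNet, hx] at h
      · rcases g with _ | g | g
        · simp [joinNet, hx] at h
        · obtain ⟨b, h1, h2, h3⟩ := p.mult x g (by simpa [joinNet, hx] using h)
          exact ⟨b, by simp [joinNet, hx, h1], by simp [h2], h3⟩
        · simp [joinNet, hx] at h
    · by_cases hx : x = Q.main
      · rcases g with _ | g | g
        · exact ⟨true, by simp [joinNet, hx], by simp [hx, q.main_addr], rfl⟩
        · simp [joinNet, hx] at h
        · simp [joinNet, hx] at h
      · rcases g with _ | g | g
        · simp [joinNet, hx] at h
        · simp [joinNet, hx] at h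
        · obtain ⟨b, h1, h2, h3⟩ := q.mult x g (by simpa [joinNet, hx] using h)
          exact ⟨b, by simp [joinNet, hx, h1], by simp [h2], h3⟩
  tgt_mult x n h := by
    have hn : s = .tens ∨ s = .parr := by tauto
    rcases x with _ | x | x
    · simp [joinNet] at h
    · by_cases hx : x = P.main
      · simp only [joinNet, hx, if_true] at h
        obtain rfl := Option.some.inj h
        exact ⟨hn, none, rfl⟩
      · simp only [joinNet, hx, if_false] at h
        obtain ⟨k, hk, rfl⟩ := Option.map_eq_some_iff.1 h
        obtain ⟨h1, g, rfl⟩ := p.tgt_mult x k hk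
        exact ⟨h1, some (.inl g), rfl⟩
    · by_cases hx : x = Q.main
      · simp only [joinNet, hx, if_true] at h
        obtain rfl := Option.some.inj h
        exact ⟨hn, none, rfl⟩
      · simp only [joinNet, hx, if_false] at h
        obtain ⟨k, hk, rfl⟩ := Option.map_eq_some_iff.1 h
        obtain ⟨h1, g, rfl⟩ := q.tgt_mult x k hk
        exact ⟨h1, some (.inr g), rfl⟩
  up x b m h h' := by
    have hn : s = .tens ∨ s = .parr := by tauto
    rcases x with _ | x | x
    · refine ⟨hn, ?_⟩
      cases b
      · exact ⟨some (.inl P.main), by simp [joinNet], by simp [joinNet]⟩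
      · exact ⟨some (.inr Q.main), by simp [joinNet], by simp [joinNet]⟩
    · obtain ⟨h1, y, h2, h3⟩ := p.up x b m h h'
      have hy : y ≠ P.main := by
        rintro rfl
        rw [(p.tgt_none P.main).2 (Or.inl rfl)] at h2
        simp at h2
      exact ⟨h1, some (.inl y), by simp [joinNet, hy, h2], by simp [joinNet, hy, h3]⟩
    · obtain ⟨h1, y, h2, h3⟩ := q.up x b m h h'
      have hy : y ≠ Q.main := by
        rintro rfl
        rw [(q.tgt_none Q.main).2 (Or.inl rfl)] at h2
        simp at h2
      exact ⟨h1, some (.inr y), by simp [joinNet, hy, h2], by simp [joinNet, hy, h3]⟩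
  leaf x h h' := by
    rcases x with _ | x | x
    · rcases hs with ⟨rfl, rfl⟩ | ⟨rfl, rfl⟩ <;> simp [joinNet, NegOcc, sub] at h'
    · exact p.leaf x h h'
    · exact q.leaf x h h'
  ex_one m h := by
    rcases m with _ | ⟨_ | _, m⟩
    · rcases hs with ⟨rfl, rfl⟩ | ⟨rfl, rfl⟩ <;> simp [sub] at h
    · obtain ⟨x, h1, h2, h3⟩ := p.ex_one m (by
        rcases hs with ⟨rfl, rfl⟩ | ⟨rfl, rfl⟩ <;> exact h)
      exact ⟨some (.inl x), by simp [h1], h2, h3⟩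
    · obtain ⟨x, h1, h2, h3⟩ := q.ex_one m (by
        rcases hs with ⟨rfl, rfl⟩ | ⟨rfl, rfl⟩ <;> exact h)
      exact ⟨some (.inr x), by simp [h1], h2, h3⟩
  ex_side m a h ha h' := by
    rcases m with _ | ⟨_ | _, m⟩
    · rcases hs with ⟨rfl, rfl⟩ | ⟨rfl, rfl⟩ <;> simp [sub] at h <;> subst h <;> exact ha.elim
    · obtain ⟨x, h1, h2⟩ := p.ex_side m a (by
        rcases hs with ⟨rfl, rfl⟩ | ⟨rfl, rfl⟩ <;> exact h) ha h'
      exact ⟨some (.inl x), by simp [h1], h2⟩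
    · obtain ⟨x, h1, h2⟩ := q.ex_side m a (by
        rcases hs with ⟨rfl, rfl⟩ | ⟨rfl, rfl⟩ <;> exact h) ha h'
      exact ⟨some (.inr x), by simp [h1], h2⟩

def circData : (B : Formula) → CircData (circNet B) B
  | .one => circOne
  | .bot => circAx .bot trivial (by simp)
  | .var n => circAx (.var n) trivial (by simp)
  | .covar n => circAx (.covar n) trivial (by simp)
  | .tens A B => circJoin .tens (.tens A B) A B _ _ (circData A) (circData B) (Or.inl ⟨rfl, rfl⟩)
  | .parr A B => circJoin .parr (.parr A B) A B _ _ (circData A) (circData B) (Or.inr ⟨rfl, rfl⟩)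

open Formula Struct

/-- Moves of a single token, forgetting synchronization. -/
inductive St1 (S : Struct) : PosVal S → PosVal S → Prop
  | axUp {e e' : S.Edge} {m : Addr} : NegOcc (S.typ e) m → S.sort (S.src e') = .ax →
      S.src e = S.src e' → e' ≠ e → St1 S (.atom e m) (.atom e' m)
  | cutDown {e e' : S.Edge} {m : Addr} {c : S.Node} : PosOcc (S.typ e) m → S.sort c = .cut →
      S.tgt e = some c → S.tgt e' = some c → e' ≠ e → St1 S (.atom e m) (.atom e' m)
  | multDown {e g : S.Edge} {m : Addr} {b : Bool} : PosOcc (S.typ e) m →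
      (S.sort (S.src g) = .tens ∨ S.sort (S.src g) = .parr) → S.tgt e = some (S.src g) →
      S.pIdx e = (if b then 1 else 0) → St1 S (.atom e m) (.atom g (b :: m))
  | multUp {e g : S.Edge} {m : Addr} {b : Bool} : NegOcc (S.typ g) (b :: m) →
      (S.sort (S.src g) = .tens ∨ S.sort (S.src g) = .parr) → S.tgt e = some (S.src g) →
      S.pIdx e = (if b then 1 else 0) → St1 S (.atom g (b :: m)) (.atom e m)
  | lock {e : S.Edge} : St1 S (.atom e []) (.lock e 0)
  | syncDown {e e' : S.Edge} {m : Addr} : AtomOcc (S.typ e) m → (S.typ e).Positive →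
      S.sort (S.src e') = .sync → S.tgt e = some (S.src e') → S.cIdx e' = S.pIdx e →
      St1 S (.atom e m) (.atom e' m)
  | syncUp {e e' : S.Edge} {m : Addr} : AtomOcc (S.typ e) m → (S.typ e).Negative →
      S.sort (S.src e) = .sync → S.tgt e' = some (S.src e) → S.pIdx e' = S.cIdx e →
      St1 S (.atom e m) (.atom e' m)

section WFFacts
variable {S : Struct} (hWF : S.WF)
include hWF

theorem wf_ax {e e' : S.Edge} (h : S.src e = S.src e') (hs : S.sort (S.src e') = .ax)
    (hne : e' ≠ e) : S.typ e' = (S.typ e).dual := by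
  obtain ⟨-, a, b, hab, hc, ht⟩ := hWF.1 _ hs
  have h1 : e ∈ S.concls (S.src e') := by simp [concls, h]
  have h2 : e' ∈ S.concls (S.src e') := by simp [concls]
  rw [hc] at h1 h2
  simp only [Finset.mem_insert, Finset.mem_singleton] at h1 h2
  rcases h1 with rfl | rfl <;> rcases h2 with rfl | rfl <;> simp_all [dual_dual]

theorem wf_ax_uniq {e f e' : S.Edge} (h : S.src e = S.src e') (h' : S.src f = S.src e')
    (hs : S.sort (S.src e') = .ax) (hne : e' ≠ e) (hne' : e' ≠ f) : e = f := by
  obtain ⟨-, a, b, hab, hc, ht⟩ := hWF.1 _ hs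
  have h1 : e ∈ S.concls (S.src e') := by simp [concls, h]
  have h2 : e' ∈ S.concls (S.src e') := by simp [concls]
  have h3 : f ∈ S.concls (S.src e') := by simp [concls, h']
  rw [hc] at h1 h2 h3
  simp only [Finset.mem_insert, Finset.mem_singleton] at h1 h2 h3
  grind

theorem wf_cut {e e' : S.Edge} {c : S.Node} (h : S.tgt e = some c) (h' : S.tgt e' = some c)
    (hs : S.sort c = .cut) (hne : e' ≠ e) : S.typ e' = (S.typ e).dual := by
  obtain ⟨-, a, b, hab, hc, ht⟩ := hWF.2.1 _ hs
  have h1 : e ∈ S.prems c := by simp [prems, h]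
  have h2 : e' ∈ S.prems c := by simp [prems, h']
  rw [hc] at h1 h2
  simp only [Finset.mem_insert, Finset.mem_singleton] at h1 h2
  rcases h1 with rfl | rfl <;> rcases h2 with rfl | rfl <;> simp_all [dual_dual]

theorem wf_cut_uniq {e f e' : S.Edge} {c : S.Node} (h : S.tgt e = some c)
    (h' : S.tgt e' = some c) (h'' : S.tgt f = some c)
    (hs : S.sort c = .cut) (hne : e' ≠ e) (hne' : e' ≠ f) : e = f := by
  obtain ⟨-, a, b, hab, hc, ht⟩ := hWF.2.1 _ hs
  have h1 : e ∈ S.prems c := by simp [prems, h]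
  have h2 : e' ∈ S.prems c := by simp [prems, h']
  have h3 : f ∈ S.prems c := by simp [prems, h'']
  rw [hc] at h1 h2 h3
  simp only [Finset.mem_insert, Finset.mem_singleton] at h1 h2 h3
  grind

theorem wf_mult {n : S.Node} (hs : S.sort n = .tens ∨ S.sort n = .parr) :
    ∃ e f g, S.prems n = {e, f} ∧ S.pIdx e = 0 ∧ S.pIdx f = 1 ∧ S.concls n = {g} ∧
      (∀ m, sub (S.typ g) (false :: m) = sub (S.typ e) m) ∧
      (∀ m, sub (S.typ g) (true :: m) = sub (S.typ f) m) := by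
  rcases hs with hs | hs
  · obtain ⟨e, f, g, -, h1, h2, h3, h4, h5⟩ := hWF.2.2.1 _ hs
    exact ⟨e, f, g, h1, h2, h3, h4, fun m => by rw [h5]; rfl, fun m => by rw [h5]; rfl⟩
  · obtain ⟨e, f, g, -, h1, h2, h3, h4, h5⟩ := hWF.2.2.2.1 _ hs
    exact ⟨e, f, g, h1, h2, h3, h4, fun m => by rw [h5]; rfl, fun m => by rw [h5]; rfl⟩

theorem wf_mult_typ {e g : S.Edge} {b : Bool}
    (hs : S.sort (S.src g) = .tens ∨ S.sort (S.src g) = .parr) (ht : S.tgt e = some (S.src g))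
    (hi : S.pIdx e = (if b then 1 else 0)) (m : Addr) :
    sub (S.typ g) (b :: m) = sub (S.typ e) m := by
  obtain ⟨x, y, z, h1, h2, h3, h4, h5, h6⟩ := wf_mult hWF hs
  have a1 : e ∈ S.prems (S.src g) := by simp [prems, ht]
  have a2 : g ∈ S.concls (S.src g) := by simp [concls]
  rw [h1] at a1
  rw [h4] at a2
  simp only [Finset.mem_insert, Finset.mem_singleton] at a1 a2
  subst a2
  cases b <;> rcases a1 with rfl | rfl <;> simp_all

theorem wf_mult_concl {g g' : S.Edge}
    (hs : S.sort (S.src g) = .tens ∨ S.sort (S.src g) = .parr) (h : S.src g' = S.src g) :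
    g' = g := by
  obtain ⟨x, y, z, h1, h2, h3, h4, h5, h6⟩ := wf_mult hWF hs
  have a1 : g' ∈ S.concls (S.src g) := by simp [concls, h]
  have a2 : g ∈ S.concls (S.src g) := by simp [concls]
  rw [h4] at a1 a2
  simp only [Finset.mem_singleton] at a1 a2
  rw [a1, a2]

theorem wf_mult_prem {n : S.Node} {e e' : S.Edge}
    (hs : S.sort n = .tens ∨ S.sort n = .parr) (h : S.tgt e = some n) (h' : S.tgt e' = some n)
    (hi : S.pIdx e = S.pIdx e') : e = e' := by
  obtain ⟨x, y, z, h1, h2, h3, h4, h5, h6⟩ := wf_mult hWF hs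
  have a1 : e ∈ S.prems n := by simp [prems, h]
  have a2 : e' ∈ S.prems n := by simp [prems, h']
  rw [h1] at a1 a2
  simp only [Finset.mem_insert, Finset.mem_singleton] at a1 a2
  rcases a1 with rfl | rfl <;> rcases a2 with rfl | rfl <;> simp_all

theorem wf_one {e : S.Edge} (hs : S.sort (S.src e) = .one) : S.typ e = .one := by
  obtain ⟨-, x, h1, h2⟩ := hWF.2.2.2.2.1 _ hs
  have a1 : e ∈ S.concls (S.src e) := by simp [concls]
  rw [h1] at a1
  simp only [Finset.mem_singleton] at a1
  rw [a1, h2]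

theorem wf_sync_typ {e f : S.Edge} (hs : S.sort (S.src f) = .sync) (h : S.tgt e = some (S.src f))
    (hi : S.cIdx f = S.pIdx e) : S.typ f = S.typ e :=
  (hWF.2.2.2.2.2.2.1 _ hs).2.2.2 e (by simp [prems, h]) f (by simp [concls]) hi

theorem wf_sync_prem {e e' f : S.Edge} (hs : S.sort (S.src f) = .sync)
    (h : S.tgt e = some (S.src f)) (h' : S.tgt e' = some (S.src f))
    (hi : S.cIdx f = S.pIdx e) (hi' : S.cIdx f = S.pIdx e') : e = e' :=
  ((hWF.2.2.2.2.2.2.1 _ hs).2.2.1 f (by simp [concls])).unique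
    ⟨by simp [prems, h], hi.symm⟩ ⟨by simp [prems, h'], hi'.symm⟩

theorem wf_sync_concl {e f f' : S.Edge} (hs : S.sort (S.src f) = .sync)
    (h : S.tgt e = some (S.src f)) (h' : S.src f' = S.src f)
    (hi : S.pIdx e = S.cIdx f) (hi' : S.pIdx e = S.cIdx f') : f = f' :=
  ((hWF.2.2.2.2.2.2.1 _ hs).2.1 e (by simp [prems, h])).unique
    ⟨by simp [concls], hi.symm⟩ ⟨by simp [concls, h'], hi'.symm⟩

theorem st1_pol {v : PosVal S} {e : S.Edge} {m : Addr} (h : St1 S v (.atom e m)) :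
    (PosOcc (S.typ e) m ∧ S.sort (S.src e) ≠ .one) ∨
    (NegOcc (S.typ e) m ∧ S.tgt e ≠ none) := by
  cases h with
  | axUp h1 h2 h3 h4 =>
    left; rw [wf_ax hWF h3 h2 h4, posOcc_dual]; exact ⟨h1, by simp [h2]⟩
  | cutDown h1 h2 h3 h4 h5 =>
    right; rw [wf_cut hWF h3 h4 h2 h5, negOcc_dual]; exact ⟨h1, by simp [h4]⟩
  | multDown h1 h2 h3 h4 =>
    left
    refine ⟨(posOcc_of_sub_eq (wf_mult_typ hWF h2 h3 h4 _)).2 h1, ?_⟩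
    rcases h2 with h2 | h2 <;> simp [h2]
  | multUp h1 h2 h3 h4 =>
    right
    exact ⟨(negOcc_of_sub_eq (wf_mult_typ hWF h2 h3 h4 _)).1 h1, by simp [h3]⟩
  | syncDown h1 h2 h3 h4 h5 =>
    left; rw [wf_sync_typ hWF h3 h4 h5]; exact ⟨h2.posOcc h1, by simp [h3]⟩
  | syncUp h1 h2 h3 h4 h5 =>
    right; rw [← wf_sync_typ hWF h3 h4 h5.symm]; exact ⟨h2.negOcc h1, by simp [h4]⟩

theorem st1_form {v : PosVal S} {e : S.Edge} {m : Addr} (h : St1 S v (.atom e m)) :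
    (PosOcc (S.typ e) m ∧
      ((S.sort (S.src e) = .ax ∧ ∃ f, v = .atom f m ∧ S.src f = S.src e ∧ e ≠ f) ∨
       ((S.sort (S.src e) = .tens ∨ S.sort (S.src e) = .parr) ∧ ∃ f b k, m = b :: k ∧
          v = .atom f k ∧ S.tgt f = some (S.src e) ∧ S.pIdx f = (if b then 1 else 0)) ∨
       (S.sort (S.src e) = .sync ∧ ∃ f, v = .atom f m ∧ S.tgt f = some (S.src e) ∧
          S.cIdx e = S.pIdx f))) ∨
    (NegOcc (S.typ e) m ∧ ∃ n, S.tgt e = some n ∧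
      ((S.sort n = .cut ∧ ∃ f, v = .atom f m ∧ S.tgt f = some n ∧ e ≠ f) ∨
       ((S.sort n = .tens ∨ S.sort n = .parr) ∧ ∃ g b, v = .atom g (b :: m) ∧ S.src g = n ∧
          S.pIdx e = (if b then 1 else 0)) ∨
       (S.sort n = .sync ∧ ∃ f, v = .atom f m ∧ S.src f = n ∧ S.pIdx e = S.cIdx f))) := by
  cases h with
  | axUp h1 h2 h3 h4 =>
    left; rw [wf_ax hWF h3 h2 h4, posOcc_dual]
    exact ⟨h1, Or.inl ⟨h2, _, rfl, h3, h4⟩⟩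
  | cutDown h1 h2 h3 h4 h5 =>
    right; rw [wf_cut hWF h3 h4 h2 h5, negOcc_dual]
    exact ⟨h1, _, h4, Or.inl ⟨h2, _, rfl, h3, h5⟩⟩
  | multDown h1 h2 h3 h4 =>
    left
    exact ⟨(posOcc_of_sub_eq (wf_mult_typ hWF h2 h3 h4 _)).2 h1,
      Or.inr (Or.inl ⟨h2, _, _, _, rfl, rfl, h3, h4⟩)⟩
  | multUp h1 h2 h3 h4 =>
    right
    exact ⟨(negOcc_of_sub_eq (wf_mult_typ hWF h2 h3 h4 _)).1 h1, _, h3,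
      Or.inr (Or.inl ⟨h2, _, _, rfl, rfl, h4⟩)⟩
  | syncDown h1 h2 h3 h4 h5 =>
    left; rw [wf_sync_typ hWF h3 h4 h5]
    exact ⟨h2.posOcc h1, Or.inr (Or.inr ⟨h3, _, rfl, h4, h5⟩)⟩
  | syncUp h1 h2 h3 h4 h5 =>
    right; rw [← wf_sync_typ hWF h3 h4 h5.symm]
    exact ⟨h2.negOcc h1, _, h4, Or.inr (Or.inr ⟨h3, _, rfl, rfl, h5⟩)⟩

theorem ite_bool_inj {b c : Bool} (h : (if b then 1 else 0 : ℕ) = if c then 1 else 0) : b = c := by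
  cases b <;> cases c <;> simp_all

theorem st1_left_unique {v w x : PosVal S} (h : St1 S v x) (h' : St1 S w x) : v = w := by
  cases x with
  | lock e i => cases h; cases h'; rfl
  | atom e m =>
    rcases st1_form hWF h with ⟨p, q⟩ | ⟨p, n, hn, q⟩ <;>
    rcases st1_form hWF h' with ⟨p', q'⟩ | ⟨p', n', hn', q'⟩
    · rcases q with ⟨hs, f, rfl, a, b⟩ | ⟨hs, f, b, k, rfl, rfl, a, c⟩ | ⟨hs, f, rfl, a, b⟩ <;>
      rcases q' with ⟨hs', f', rfl, a', b'⟩ | ⟨hs', f', b', k', hk, rfl, a', c'⟩ |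
        ⟨hs', f', rfl, a', b'⟩ <;> try (exfalso; simp [hs] at hs'; done)
      · rw [wf_ax_uniq hWF a a' hs b b']
      · exfalso; simp [hs'] at hs
      · simp only [List.cons.injEq] at hk
        obtain ⟨rfl, rfl⟩ := hk
        rw [wf_mult_prem hWF hs a a' (c.trans c'.symm)]
      · exfalso; simp [hs'] at hs
      · rw [wf_sync_prem hWF hs a a' b b']
    · exact (not_pos_neg p p').elim
    · exact (not_pos_neg p' p).elim
    · obtain rfl : n = n' := by rw [hn] at hn'; exact Option.some.inj hn'
      rcases q with ⟨hs, f, rfl, a, b⟩ | ⟨hs, f, b, rfl, a, c⟩ | ⟨hs, f, rfl, a, b⟩ <;>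
      rcases q' with ⟨hs', f', rfl, a', b'⟩ | ⟨hs', f', b', rfl, a', c'⟩ |
        ⟨hs', f', rfl, a', b'⟩ <;> try (exfalso; simp [hs] at hs'; done)
      · rw [wf_cut_uniq hWF a hn a' hs b b']
      · exfalso; simp [hs'] at hs
      · subst a
        obtain rfl := wf_mult_concl hWF hs a'
        obtain rfl := ite_bool_inj hWF (c.symm.trans c')
        rfl
      · exfalso; simp [hs'] at hs
      · subst a
        rw [wf_sync_concl hWF hs hn a' b b']

theorem st1_orig {v : PosVal S} {p : S.Edge × Addr} (hp : S.InitPos p ∨ S.OnePos p)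
    (h : St1 S v (.atom p.1 p.2)) : False := by
  obtain ⟨e, m⟩ := p
  rcases hp with ⟨h1, h2⟩ | ⟨h1, h2⟩
  · rcases st1_pol hWF h with ⟨a, b⟩ | ⟨a, b⟩
    · exact not_pos_neg a h2
    · exact b h1
  · simp only at h1 h2
    subst h2
    rcases st1_pol hWF h with ⟨a, b⟩ | ⟨a, b⟩
    · exact b h1
    · rw [wf_one hWF h1] at a
      simp [NegOcc, sub] at a

theorem st1_origin_unique {p q : S.Edge × Addr} {v : PosVal S}
    (hp : S.InitPos p ∨ S.OnePos p) (hq : S.InitPos q ∨ S.OnePos q)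
    (h : Relation.ReflTransGen (St1 S) (.atom p.1 p.2) v)
    (h' : Relation.ReflTransGen (St1 S) (.atom q.1 q.2) v) : p = q := by
  induction h with
  | refl =>
    rcases Relation.ReflTransGen.cases_tail h' with h | ⟨c, -, h⟩
    · injection h with h1 h2
      exact Prod.ext h1 h2
    · exact (st1_orig hWF hp h).elim
  | tail h1 h2 ih =>
    rcases Relation.ReflTransGen.cases_tail h' with h | ⟨c, h3, h⟩
    · subst h
      exact (st1_orig hWF hq h2).elim
    · obtain rfl := st1_left_unique hWF h2 h
      exact ih h3

end WFFacts

theorem st1_step {S : Struct} {T T' : SState S} (h : STrans S T T')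
    (hI : ∀ p v, T.f p = some v → Relation.ReflTransGen (St1 S) (.atom p.1 p.2) v) :
    ∀ p v, T'.f p = some v → Relation.ReflTransGen (St1 S) (.atom p.1 p.2) v := by
  have key : ∀ (p : S.Edge × Addr) (v w : PosVal S), T.f p = some v → T'.f p = some w →
      (∀ q, q ≠ p → T'.f q = T.f q) → St1 S v w →
      ∀ p v, T'.f p = some v → Relation.ReflTransGen (St1 S) (.atom p.1 p.2) v := by
    intro p v w h1 h2 h3 h4 q u hq
    by_cases hqp : q = p
    · subst hqp
      rw [h2] at hq
      obtain rfl := Option.some.inj hq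
      exact (hI _ _ h1).tail h4
    · rw [h3 q hqp] at hq
      exact hI _ _ hq
  cases h with
  | axUp h1 h2 h3 h4 h5 h6 h7 h8 h9 =>
    subst h6
    exact key _ _ _ h1 h9 h8 (.axUp h2 h4 h3 h7)
  | cutDown h1 h2 h3 h4 h5 h6 h7 h8 h9 => exact key _ _ _ h1 h9 h8 (.cutDown h2 h4 h3 h6 h7)
  | multDown h1 h2 h3 h4 h5 h6 h7 h8 h9 =>
    subst h6
    exact key _ _ _ h1 h9 h8 (.multDown h2 h4 h3 h7)
  | multUp h1 h2 h3 h4 h5 h6 h7 h8 h9 =>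
    subst h3
    exact key _ _ _ h1 h9 h8 (.multUp h2 h4 h6 h7)
  | lockTok h1 h2 h3 h4 h5 h6 h7 => exact key _ _ _ h1 h7 h6 .lock
  | oneSpawn h1 h2 h3 h4 h5 h6 =>
    intro q u hq
    rename_i n e
    by_cases hqp : q = (e, [])
    · subst hqp
      rw [h6] at hq
      obtain rfl := Option.some.inj hq
      exact .refl
    · rw [h5 q hqp] at hq
      exact hI _ _ hq
  | syncCross h1 h2 h3 h4 h5 h6 h7 =>
    rename_i l
    intro q u hq
    by_cases hc : ∀ e m, T.f q = some (.atom e m) →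
          ¬(S.tgt e = some l ∧ (S.typ e).Positive) ∧ ¬(S.src e = l ∧ (S.typ e).Negative)
    · rw [h7 q hc] at hq
      exact hI _ _ hq
    · push Not at hc
      obtain ⟨e, m, he, hc⟩ := hc
      have hv : AtomOcc (S.typ e) m := T.val_valid _ _ he
      by_cases hd : S.tgt e = some l ∧ (S.typ e).Positive
      · obtain ⟨e', a1, a2, a3⟩ := h5 q e m he hd.1 hd.2
        rw [a3] at hq
        obtain rfl := Option.some.inj hq
        subst a1
        exact (hI _ _ he).tail (.syncDown hv hd.2 h1 hd.1 a2)
      · obtain ⟨c1, c2⟩ := hc (fun a b => hd ⟨a, b⟩)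
        obtain ⟨e', a1, a2, a3⟩ := h6 q e m he c1 c2
        rw [a3] at hq
        obtain rfl := Option.some.inj hq
        subst c1
        exact (hI _ _ he).tail (.syncUp hv c2 h1 a1 a2)

theorem reach_injective {S : Struct} (hWF : S.WF) {T : SState S}
    (h : Relation.ReflTransGen (STrans S) (initState S) T) {p q : S.Edge × Addr} {v : PosVal S}
    (hp : T.f p = some v) (hq : T.f q = some v) : p = q := by
  have hI : ∀ p v, T.f p = some v → Relation.ReflTransGen (St1 S) (.atom p.1 p.2) v := by
    clear hp hq
    induction h with
    | refl =>
      intro p v h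
      by_cases hp : S.InitPos p
      · simp only [initState, if_pos hp, Option.some.injEq] at h
        subst h; exact .refl
      · simp [initState, hp] at h
    | tail _ h ih => exact st1_step h ih
  exact st1_origin_unique hWF (T.dom_subset p (by simp [hp])) (T.dom_subset q (by simp [hq]))
    (hI _ _ hp) (hI _ _ hq)

open Formula Struct

abbrev cd {R : Struct} (b : BadC R) : CircData (circNet (R.typ b.val).dual) (R.typ b.val).dual :=
  circData _

theorem cd_sub_ns {R : Struct} (b : BadC R) (x : (circNet (R.typ b.val).dual).S.Edge)
    (h : (cd b).side x = false) (m : Addr) :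
    sub (R.typ b.val).dual ((cd b).addr x ++ m) =
      sub ((circNet (R.typ b.val).dual).S.typ x) m := by
  rw [sub_append, (cd b).typ_ns x h]; rfl

theorem cd_sub_s {R : Struct} (b : BadC R) (x : (circNet (R.typ b.val).dual).S.Edge)
    (h : (cd b).side x = true) (m : Addr) :
    sub (R.typ b.val) ((cd b).addr x ++ m) =
      sub ((circNet (R.typ b.val).dual).S.typ x) m := by
  obtain ⟨a, -, -, h2, h3⟩ := (cd b).typ_s x h
  have : sub (R.typ b.val) ((cd b).addr x) = some a.dual := by
    rw [sub_dual] at h2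
    obtain ⟨c, hc, rfl⟩ := Option.map_eq_some_iff.1 h2
    rw [hc, dual_dual]
  rw [sub_append, this, h3]; rfl

theorem cd_side_nil {R : Struct} (b : BadC R) (x : (circNet (R.typ b.val).dual).S.Edge)
    (h : (cd b).side x = true) {m : Addr}
    (hm : AtomOcc ((circNet (R.typ b.val).dual).S.typ x) m) : m = [] := by
  obtain ⟨a, h1, -, h2, h3⟩ := (cd b).typ_s x h
  rw [h3] at hm
  obtain ⟨c, hc, -⟩ := hm
  exact sub_atom (isAtom_dual h1) hc

theorem cd_pos_ns {R : Struct} (b : BadC R) (x : (circNet (R.typ b.val).dual).S.Edge)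
    (h : (cd b).side x = false) (m : Addr) :
    PosOcc ((circNet (R.typ b.val).dual).S.typ x) m ↔
      NegOcc (R.typ b.val) ((cd b).addr x ++ m) := by
  rw [← posOcc_dual]; exact (posOcc_of_sub_eq (cd_sub_ns b x h m)).symm

theorem cd_neg_ns {R : Struct} (b : BadC R) (x : (circNet (R.typ b.val).dual).S.Edge)
    (h : (cd b).side x = false) (m : Addr) :
    NegOcc ((circNet (R.typ b.val).dual).S.typ x) m ↔
      PosOcc (R.typ b.val) ((cd b).addr x ++ m) := by
  rw [← negOcc_dual]; exact (negOcc_of_sub_eq (cd_sub_ns b x h m)).symm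

theorem cd_pos_s {R : Struct} (b : BadC R) (x : (circNet (R.typ b.val).dual).S.Edge)
    (h : (cd b).side x = true) (m : Addr) :
    PosOcc ((circNet (R.typ b.val).dual).S.typ x) m ↔
      PosOcc (R.typ b.val) ((cd b).addr x ++ m) :=
  (posOcc_of_sub_eq (cd_sub_s b x h m)).symm

theorem cd_neg_s {R : Struct} (b : BadC R) (x : (circNet (R.typ b.val).dual).S.Edge)
    (h : (cd b).side x = true) (m : Addr) :
    NegOcc ((circNet (R.typ b.val).dual).S.typ x) m ↔
      NegOcc (R.typ b.val) ((cd b).addr x ++ m) :=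
  (negOcc_of_sub_eq (cd_sub_s b x h m)).symm

theorem cd_atom {R : Struct} (b : BadC R) (x : (circNet (R.typ b.val).dual).S.Edge)
    {m : Addr} (hm : AtomOcc ((circNet (R.typ b.val).dual).S.typ x) m) :
    AtomOcc (R.typ b.val) ((cd b).addr x ++ m) := by
  cases h : (cd b).side x
  · rcases pos_or_neg hm with h' | h'
    · exact ((cd_pos_ns b x h m).1 h').atomOcc
    · exact ((cd_neg_ns b x h m).1 h').atomOcc
  · exact (atomOcc_of_sub_eq (cd_sub_s b x h m)).2 hm

section
variable {R : Struct}

/-- Projection of the positions of the closure. -/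
def gE (p : (netClosure R).Edge × Addr) : R.Edge × Addr :=
  match p with
  | (.inl e, m) => (e, m)
  | (.inr ⟨b, x⟩, m) => (b.val, (cd b).addr x ++ m)

def piV (v : PosVal (netClosure R)) : PosVal R :=
  match v with
  | .atom e m => .atom (gE (e, m)).1 (gE (e, m)).2
  | .lock (.inl e) i => .lock e i
  | .lock (.inr ⟨b, _⟩) _ => .atom b.val []

def HOrig (p : (netClosure R).Edge × Addr) : Prop :=
  (netClosure R).InitPos p ∨ (netClosure R).OnePos p

def Bad (e : R.Edge) : Prop := R.tgt e = none ∧ (R.typ e).hasBotB = true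

theorem h_tgt_bad {e : R.Edge} (h : Bad e) :
    (netClosure R).tgt (Sum.inl e) = some (.inr (.inr ⟨e, h⟩)) := by
  have h' : R.tgt e = none ∧ (R.typ e).hasBotB = true := h
  simp only [netClosure]
  rw [dif_pos h']

theorem h_tgt_good {e : R.Edge} (h : ¬ Bad e) :
    (netClosure R).tgt (Sum.inl e) = (R.tgt e).map Sum.inl := by
  have h' : ¬ (R.tgt e = none ∧ (R.typ e).hasBotB = true) := h
  simp only [netClosure]
  rw [dif_neg h']

theorem h_tgt_main (b : BadC R) :
    (netClosure R).tgt (Sum.inr ⟨b, (circNet (R.typ b.val).dual).main⟩) =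
      some (.inr (.inr b)) := by
  simp only [netClosure, if_true]

theorem h_tgt_nmain (b : BadC R) {x : (circNet (R.typ b.val).dual).S.Edge}
    (h : x ≠ (circNet (R.typ b.val).dual).main) :
    (netClosure R).tgt (Sum.inr ⟨b, x⟩) =
      ((circNet (R.typ b.val).dual).S.tgt x).map fun n => .inr (.inl ⟨b, n⟩) := by
  simp only [netClosure, h, if_false]

theorem h_pIdx_nmain (b : BadC R) {x : (circNet (R.typ b.val).dual).S.Edge}
    (h : x ≠ (circNet (R.typ b.val).dual).main) :
    (netClosure R).pIdx (Sum.inr ⟨b, x⟩) = (circNet (R.typ b.val).dual).S.pIdx x := by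
  simp only [netClosure, h, if_false]

theorem h_tgt_none_inl {e : R.Edge} :
    (netClosure R).tgt (Sum.inl e) = none ↔ R.tgt e = none ∧ ¬ Bad e := by
  by_cases h : Bad e
  · rw [h_tgt_bad h]; simp [h]
  · rw [h_tgt_good h]
    exact ⟨fun k => ⟨Option.map_eq_none_iff.1 k, h⟩, fun k => Option.map_eq_none_iff.2 k.1⟩

theorem h_tgt_none_inr (b : BadC R) {x : (circNet (R.typ b.val).dual).S.Edge} :
    (netClosure R).tgt (Sum.inr ⟨b, x⟩) = none ↔ (cd b).side x = true := by
  by_cases h : x = (circNet (R.typ b.val).dual).main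
  · subst h
    rw [h_tgt_main]; simp [(cd b).main_side]
  · rw [h_tgt_nmain b h]
    have := (cd b).tgt_none x
    simp only [h, false_or] at this
    rw [← this]; exact Option.map_eq_none_iff

theorem h_tgt_inl {e : (netClosure R).Edge} {n : R.Node} :
    (netClosure R).tgt e = some (.inl n) ↔ ∃ e0, e = Sum.inl e0 ∧ R.tgt e0 = some n := by
  rcases e with e | ⟨b, x⟩
  · by_cases h : Bad e
    · rw [h_tgt_bad h]
      constructor
      · intro h; cases h
      · rintro ⟨e0, h1, h2⟩
        obtain rfl := Sum.inl.inj h1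
        rw [h.1] at h2; simp at h2
    · rw [h_tgt_good h]
      constructor
      · intro h'
        obtain ⟨k, hk, h'⟩ := Option.map_eq_some_iff.1 h'
        obtain rfl := Sum.inl.inj h'
        exact ⟨e, rfl, hk⟩
      · rintro ⟨e0, h1, h2⟩
        obtain rfl := Sum.inl.inj h1
        rw [h2]; rfl
  · constructor
    · intro h
      by_cases hx : x = (circNet (R.typ b.val).dual).main
      · subst hx
        rw [h_tgt_main] at h; cases h
      · rw [h_tgt_nmain b hx] at h
        obtain ⟨k, hk, h'⟩ := Option.map_eq_some_iff.1 h
        cases h'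
    · rintro ⟨e0, h1, h2⟩
      cases h1

theorem h_tgt_inrl {e : (netClosure R).Edge} {b : BadC R}
    {n : (circNet (R.typ b.val).dual).S.Node}
    (h : (netClosure R).tgt e = some (.inr (.inl ⟨b, n⟩))) :
    ∃ x, e = Sum.inr ⟨b, x⟩ ∧ x ≠ (circNet (R.typ b.val).dual).main ∧
      (circNet (R.typ b.val).dual).S.tgt x = some n := by
  rcases e with e | ⟨b', x⟩
  · by_cases hb : Bad e
    · rw [h_tgt_bad hb] at h; cases h
    · rw [h_tgt_good hb] at h
      obtain ⟨k, hk, h'⟩ := Option.map_eq_some_iff.1 h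
      cases h'
  · by_cases hx : x = (circNet (R.typ b'.val).dual).main
    · subst hx
      rw [h_tgt_main] at h; cases h
    · rw [h_tgt_nmain b' hx] at h
      obtain ⟨k, hk, h'⟩ := Option.map_eq_some_iff.1 h
      have h' := Sum.inl.inj (Sum.inr.inj h')
      cases h'
      exact ⟨x, rfl, hx, hk⟩

theorem h_tgt_cut {e : (netClosure R).Edge} {b : BadC R}
    (h : (netClosure R).tgt e = some (.inr (.inr b))) :
    e = Sum.inl b.val ∨ e = Sum.inr ⟨b, (circNet (R.typ b.val).dual).main⟩ := by
  rcases e with e | ⟨b', x⟩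
  · by_cases hb : Bad e
    · rw [h_tgt_bad hb] at h
      have := Sum.inr.inj (Sum.inr.inj (Option.some.inj h))
      left; rw [← this]
    · rw [h_tgt_good hb] at h
      obtain ⟨k, hk, h'⟩ := Option.map_eq_some_iff.1 h
      cases h'
  · by_cases hx : x = (circNet (R.typ b'.val).dual).main
    · subst hx
      rw [h_tgt_main] at h
      obtain rfl := Sum.inr.inj (Sum.inr.inj (Option.some.inj h))
      right; rfl
    · rw [h_tgt_nmain b' hx] at h
      obtain ⟨k, hk, h'⟩ := Option.map_eq_some_iff.1 h
      cases h'

theorem h_src_inl {e : (netClosure R).Edge} {n : R.Node} :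
    (netClosure R).src e = .inl n ↔ ∃ e0, e = Sum.inl e0 ∧ R.src e0 = n := by
  rcases e with e | ⟨b, x⟩
  · constructor
    · intro h; exact ⟨e, rfl, Sum.inl.inj h⟩
    · rintro ⟨e0, h1, rfl⟩
      obtain rfl := Sum.inl.inj h1
      rfl
  · constructor
    · intro h; simp [netClosure] at h
    · rintro ⟨e0, h1, h2⟩
      cases h1

theorem h_src_inr {e : (netClosure R).Edge} {b : BadC R}
    {n : (circNet (R.typ b.val).dual).S.Node}
    (h : (netClosure R).src e = .inr (.inl ⟨b, n⟩)) :
    ∃ x, e = Sum.inr ⟨b, x⟩ ∧ (circNet (R.typ b.val).dual).S.src x = n := by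
  rcases e with e | ⟨b', x⟩
  · simp [netClosure] at h
  · have h' := Sum.inl.inj (Sum.inr.inj h)
    cases h'
    exact ⟨x, rfl, rfl⟩

theorem h_src_cut {e : (netClosure R).Edge} {b : BadC R}
    (h : (netClosure R).src e = .inr (.inr b)) : False := by
  rcases e with e | ⟨b', x⟩ <;> simp [netClosure] at h

theorem HOrig.orig {p : (netClosure R).Edge × Addr} (h : HOrig p) :
    R.InitPos (gE p) ∨ R.OnePos (gE p) := by
  obtain ⟨e | ⟨b, x⟩, m⟩ := p
  · rcases h with ⟨h1, h2⟩ | ⟨h1, h2⟩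
    · exact Or.inl ⟨(h_tgt_none_inl.1 h1).1, h2⟩
    · exact Or.inr ⟨h1, h2⟩
  · rcases h with ⟨h1, h2⟩ | ⟨h1, h2⟩
    · exact Or.inl ⟨b.2.1, (cd_neg_s b x ((h_tgt_none_inr b).1 h1) m).1 h2⟩
    · obtain ⟨h3, h4⟩ := (cd b).one x h1
      refine Or.inl ⟨b.2.1, (cd_pos_ns b x h3 m).1 ?_⟩
      rw [h4]
      change m = [] at h2
      subst h2
      exact ⟨.one, rfl, Or.inl rfl⟩

theorem ex_hOrig {q : R.Edge × Addr} (h : R.InitPos q ∨ R.OnePos q) :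
    ∃ p : (netClosure R).Edge × Addr, HOrig p ∧ gE p = q := by
  obtain ⟨e, m⟩ := q
  rcases h with ⟨h1, h2⟩ | ⟨h1, h2⟩
  · by_cases hb : Bad e
    · obtain ⟨a, ha, h2⟩ := h2
      have hd := sub_dual (R.typ e) m
      rw [ha] at hd
      let b : BadC R := ⟨e, hb⟩
      rcases h2 with rfl | ⟨n, rfl⟩
      · obtain ⟨x, h3, h4, h5⟩ := (cd b).ex_one m hd
        refine ⟨(.inr ⟨b, x⟩, []), Or.inr ⟨h5, rfl⟩, ?_⟩
        simp [gE, h3, b]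
      · obtain ⟨x, h3, h4⟩ := (cd b).ex_side m _ hd trivial (by simp [dual])
        refine ⟨(.inr ⟨b, x⟩, []), Or.inl ⟨(h_tgt_none_inr b).2 h4,
          (cd_neg_s b x h4 []).2 ?_⟩, ?_⟩
        · rw [List.append_nil, h3]; exact ⟨_, ha, Or.inr ⟨n, rfl⟩⟩
        · simp [gE, h3, b]
    · exact ⟨(.inl e, m), Or.inl ⟨h_tgt_none_inl.2 ⟨h1, hb⟩, h2⟩, rfl⟩
  · exact ⟨(.inl e, m), Or.inr ⟨h1, h2⟩, rfl⟩

theorem hOrig_inl_not_bad (hWF : R.WF) {e : R.Edge} {m : Addr}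
    (h : HOrig (R := R) (Sum.inl e, m)) : ¬ Bad e := by
  intro hb
  rcases h with ⟨h1, h2⟩ | ⟨h1, h2⟩
  · exact (h_tgt_none_inl.1 h1).2 hb
  · have h3 := wf_one hWF (e := e) h1
    have h4 := hb.2
    rw [h3] at h4
    simp [hasBotB] at h4

theorem hOrig_inr_nil {b : BadC R} {x : (circNet (R.typ b.val).dual).S.Edge} {m : Addr}
    (h : HOrig (R := R) (Sum.inr ⟨b, x⟩, m)) : m = [] := by
  rcases h with ⟨h1, h2⟩ | ⟨h1, h2⟩
  · exact cd_side_nil b x ((h_tgt_none_inr b).1 h1) h2.atomOcc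
  · exact h2

theorem hOrig_side_aux {b : BadC R} {x y : (circNet (R.typ b.val).dual).S.Edge}
    (h : HOrig (R := R) (Sum.inr ⟨b, x⟩, [])) (hx : (cd b).side x = true)
    (hy : (cd b).side y = false) (hy1 : (circNet (R.typ b.val).dual).S.typ y = .one)
    (hxy : (cd b).addr x = (cd b).addr y) : False := by
  obtain ⟨a, -, h1, h2, -⟩ := (cd b).typ_s x hx
  have h3 := (cd b).typ_ns y hy
  rw [hy1, ← hxy, h2] at h3
  exact h1 (Option.some.inj h3)

theorem hOrig_inj (hWF : R.WF) {p p' : (netClosure R).Edge × Addr} (h : HOrig p) (h' : HOrig p')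
    (hg : gE p = gE p') : p = p' := by
  obtain ⟨e | ⟨b, x⟩, m⟩ := p <;> obtain ⟨e' | ⟨b', x'⟩, m'⟩ := p'
  · simp only [gE, Prod.mk.injEq] at hg
    rw [hg.1, hg.2]
  · simp only [gE, Prod.mk.injEq] at hg
    exact (hOrig_inl_not_bad hWF h (by rw [hg.1]; exact b'.2)).elim
  · simp only [gE, Prod.mk.injEq] at hg
    exact (hOrig_inl_not_bad hWF h' (by rw [← hg.1]; exact b.2)).elim
  · obtain rfl := hOrig_inr_nil h
    obtain rfl := hOrig_inr_nil h'
    simp only [gE, Prod.mk.injEq] at hg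
    obtain ⟨h1, h2⟩ := hg
    obtain rfl : b = b' := Subtype.ext h1
    simp only [List.append_nil] at h2
    have key : (cd b).side x = (cd b).side x' := by
      rcases h with h | h <;> rcases h' with h' | h'
      · rw [(h_tgt_none_inr b).1 h.1, (h_tgt_none_inr b).1 h'.1]
      · exact (hOrig_side_aux (Or.inl h) ((h_tgt_none_inr b).1 h.1) ((cd b).one x' h'.1).1
          ((cd b).one x' h'.1).2 h2).elim
      · exact (hOrig_side_aux (Or.inl h') ((h_tgt_none_inr b).1 h'.1) ((cd b).one x h.1).1
          ((cd b).one x h.1).2 h2.symm).elim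
      · rw [((cd b).one x h.1).1, ((cd b).one x' h'.1).1]
    rw [(cd b).inj x x' h2 key]

open Classical in
noncomputable def hO (q : R.Edge × Addr) : (netClosure R).Edge × Addr :=
  if h : ∃ p : (netClosure R).Edge × Addr, HOrig p ∧ gE p = q then h.choose else (.inl q.1, q.2)

theorem gE_hO (q : R.Edge × Addr) : gE (hO q) = q := by
  unfold hO
  split_ifs with h
  · exact h.choose_spec.2
  · rfl

theorem hOrig_hO {q : R.Edge × Addr} (h : R.InitPos q ∨ R.OnePos q) : HOrig (hO q) := by
  unfold hO
  rw [dif_pos (ex_hOrig h)]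
  exact (ex_hOrig h).choose_spec.1

theorem orig_of_hO {q : R.Edge × Addr} (h : HOrig (hO q)) : R.InitPos q ∨ R.OnePos q := by
  have := h.orig
  rwa [gE_hO] at this

theorem hO_gE (hWF : R.WF) {p : (netClosure R).Edge × Addr} (h : HOrig p) : hO (gE p) = p :=
  hOrig_inj hWF (hOrig_hO h.orig) h (gE_hO _)

open Classical in
noncomputable def proj (q : R.Edge × Addr) (o : Option (PosVal (netClosure R))) :
    Option (PosVal R) :=
  match o with
  | some v => some (piV v)
  | none => if R.InitPos q then some (.atom q.1 q.2) else none

theorem piV_valid {v : PosVal (netClosure R)} (h : (netClosure R).ValidVal v) :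
    R.ValidVal (piV v) := by
  rcases v with ⟨e | ⟨b, x⟩, m⟩ | ⟨e | ⟨b, x⟩, i⟩
  · exact h
  · exact cd_atom b x h
  · exact h
  · change (circNet (R.typ b.val).dual).S.sort _ = LinkSort.bot at h
    rcases (cd b).sorts ((circNet (R.typ b.val).dual).S.src x) with h' | h' | h' | h' <;>
      rw [h] at h' <;> simp at h'

noncomputable def phi (T : SState (netClosure R)) : SState R where
  f q := proj q (T.f (hO q))
  dom_subset q h := by
    cases hT : T.f (hO q) with
    | none =>
      by_cases hq : R.InitPos q
      · exact Or.inl hq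
      · simp [proj, hT, hq] at h
    | some v => exact orig_of_hO (T.dom_subset _ (by simp [hT]))
  init_total q h := by
    cases hT : T.f (hO q) with
    | none => simp [proj, h]
    | some v => simp [proj]
  val_valid q v h := by
    cases hT : T.f (hO q) with
    | none =>
      by_cases hq : R.InitPos q
      · simp only [proj, hT, hq, if_true, Option.some.injEq] at h
        subst h
        exact hq.2.atomOcc
      · simp [proj, hT, hq] at h
    | some w =>
      simp only [proj, hT, Option.some.injEq] at h
      subst h
      exact piV_valid (T.val_valid _ _ hT)

theorem SState.ext' {S : Struct} {T T' : SState S} (h : ∀ q, T.f q = T'.f q) : T = T' := by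
  cases T; cases T'
  have : _ = _ := funext h
  simp only at this
  subst this
  rfl

theorem phi_f (T : SState (netClosure R)) (q : R.Edge × Addr) :
    (phi T).f q = proj q (T.f (hO q)) := rfl

theorem phi_some (hWF : R.WF) {T : SState (netClosure R)} {p : (netClosure R).Edge × Addr}
    {v : PosVal (netClosure R)} (h : T.f p = some v) : (phi T).f (gE p) = some (piV v) := by
  have hp : HOrig p := T.dom_subset p (by simp [h])
  rw [phi_f, hO_gE hWF hp, h]; rfl

theorem phi_init (hWF : R.WF) : phi (initState (netClosure R)) = initState R := by
  apply SState.ext'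
  intro q
  rw [phi_f]
  by_cases hq : R.InitPos q
  · by_cases hp : (netClosure R).InitPos (hO q)
    · have h := gE_hO q
      simp only [initState, if_pos hq, if_pos hp, proj, piV]
      rw [← h, gE_hO]
    · simp only [initState, if_neg hp, proj, if_pos hq]
  · by_cases hp : (netClosure R).InitPos (hO q)
    · have h1 := hp
      obtain h2 | h2 := orig_of_hO (Or.inl hp)
      · exact (hq h2).elim
      · have h3 : HOrig (R := R) (Sum.inl q.1, q.2) := Or.inr h2
        have h4 : hO (R := R) q = (Sum.inl q.1, q.2) := hO_gE hWF h3
        rw [h4] at h1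
        exact (hq ⟨(h_tgt_none_inl.1 h1.1).1, h1.2⟩).elim
    · simp only [initState, if_neg hp, proj, if_neg hq]

theorem h_unlocked (hWF : R.WF) {T : SState (netClosure R)} {n : R.Node} :
    (netClosure R).Unlocked T (.inl n) ↔ R.Unlocked (phi T) n := by
  constructor
  · rintro ⟨p, e, i, h1, h2⟩
    obtain ⟨e, rfl, h3⟩ := h_src_inl.1 h2
    exact ⟨gE p, e, i, phi_some hWF h1, h3⟩
  · rintro ⟨q, e, i, h1, h2⟩
    rw [phi_f] at h1
    cases hT : T.f (hO q) with
    | none =>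
      rw [hT] at h1
      by_cases hq : R.InitPos q <;> simp [proj, hq] at h1
    | some v =>
      rw [hT] at h1
      rcases v with ⟨e' | ⟨b, x⟩, m⟩ | ⟨e' | ⟨b, x⟩, j⟩ <;>
        simp only [proj, piV, Option.some.injEq, reduceCtorEq] at h1
      injection h1 with h3 h4
      subst h3
      exact ⟨_, _, _, hT, h_src_inl.2 ⟨_, rfl, h2⟩⟩

theorem h_active (hWF : R.WF) {T : SState (netClosure R)} {n : R.Node} :
    (netClosure R).Active T (.inl n) ↔ R.Active (phi T) n := by
  constructor
  · intro h b hb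
    exact (h_unlocked hWF).1 (h (.inl b) (Finset.mem_image_of_mem _ hb))
  · intro h b hb
    obtain ⟨b0, hb0, rfl⟩ := Finset.mem_image.1 hb
    exact (h_unlocked hWF).2 (h b0 hb0)

theorem h_active_inrl {T : SState (netClosure R)} {b : BadC R}
    {n : (circNet (R.typ b.val).dual).S.Node} :
    (netClosure R).Active T (.inr (.inl ⟨b, n⟩)) := by
  intro c hc
  obtain ⟨c', hc', rfl⟩ := Finset.mem_image.1 hc
  rw [(cd b).boxes] at hc'
  simp at hc'

theorem h_active_cut {T : SState (netClosure R)} {b : BadC R} :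
    (netClosure R).Active T (.inr (.inr b)) := by
  intro c hc
  exact absurd hc (Finset.notMem_empty _)

open Classical in
/-- Distance of a token from its normal position. -/
noncomputable def rank (p : (netClosure R).Edge × Addr) (o : Option (PosVal (netClosure R))) : ℕ :=
  match o with
  | none =>
    match p.1 with
    | .inl _ => 0
    | .inr ⟨b, x⟩ => ((cd b).addr x).length + 2
  | some (.lock _ _) => 0
  | some (.atom (.inl e) m) => if Bad e ∧ PosOcc (R.typ e) m then m.length + 2 else 0
  | some (.atom (.inr ⟨b, x⟩) m) =>
    if (cd b).side x = true then
      (if NegOcc ((circNet (R.typ b.val).dual).S.typ x) m then ((cd b).addr x).length + 2 else 0)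
    else if PosOcc ((circNet (R.typ b.val).dual).S.typ x) m then ((cd b).addr x).length + 1
    else m.length + 1

end

open Formula Struct

section
variable {R : Struct}

theorem rank_ns {p : (netClosure R).Edge × Addr} {b : BadC R}
    {x : (circNet (R.typ b.val).dual).S.Edge} {m : Addr} (h : (cd b).side x = false) :
    rank p (some (.atom (.inr ⟨b, x⟩) m)) ≠ 0 := by
  simp only [rank, h]
  split_ifs <;> simp_all

theorem rank_s {p : (netClosure R).Edge × Addr} {b : BadC R}
    {x : (circNet (R.typ b.val).dual).S.Edge} {m : Addr}
    (h : NegOcc ((circNet (R.typ b.val).dual).S.typ x) m) :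
    rank p (some (.atom (.inr ⟨b, x⟩) m)) ≠ 0 := by
  cases hs : (cd b).side x
  · exact rank_ns hs
  · simp [rank, hs, h]

theorem rank_bad {p : (netClosure R).Edge × Addr} {e : R.Edge} {m : Addr}
    (hb : Bad e) (h : PosOcc (R.typ e) m) :
    rank p (some (.atom (.inl e) m)) ≠ 0 := by
  simp [rank, hb, h]

theorem phi_stut {T T' : SState (netClosure R)} {p : (netClosure R).Edge × Addr}
    {v v' : PosVal (netClosure R)} (h : T.f p = some v) (ho : ∀ q, q ≠ p → T'.f q = T.f q)
    (h' : T'.f p = some v') (hv : piV v' = piV v) : phi T' = phi T := by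
  apply SState.ext'
  intro q
  rw [phi_f, phi_f]
  by_cases hq : hO q = p
  · rw [hq, h, h']; simp [proj, hv]
  · rw [ho _ hq]

theorem phi_other {T T' : SState (netClosure R)} {p : (netClosure R).Edge × Addr}
    (ho : ∀ q, q ≠ p → T'.f q = T.f q) (q : R.Edge × Addr) (hq : q ≠ gE p) :
    (phi T').f q = (phi T).f q := by
  rw [phi_f, phi_f, ho]
  rintro rfl
  exact hq (gE_hO q).symm

theorem circ_tgt_ns {b : BadC R} {x : (circNet (R.typ b.val).dual).S.Edge} {n}
    (h : (circNet (R.typ b.val).dual).S.tgt x = some n) : (cd b).side x = false := by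
  cases hs : (cd b).side x
  · rfl
  · have := ((cd b).tgt_none x).2 (Or.inr hs)
    rw [h] at this; cases this

theorem circ_mult {b : BadC R} {x g : (circNet (R.typ b.val).dual).S.Edge} {c : Bool}
    (hWF : R.WF)
    (h : (circNet (R.typ b.val).dual).S.tgt x = some ((circNet (R.typ b.val).dual).S.src g))
    (hc : (circNet (R.typ b.val).dual).S.pIdx x = if c then 1 else 0) :
    (cd b).addr x = (cd b).addr g ++ [c] ∧ (cd b).side g = false ∧ (cd b).side x = false := by
  obtain ⟨c', h1, h2, h3⟩ := (cd b).mult x g h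
  rw [h1] at hc
  obtain rfl := ite_bool_inj hWF hc
  exact ⟨h2, h3, circ_tgt_ns h⟩

theorem in_edge {e : (netClosure R).Edge} {n : R.Node}
    (h : ((netClosure R).tgt e = some (.inl n) ∧ ((netClosure R).typ e).Positive) ∨
      ((netClosure R).src e = .inl n ∧ ((netClosure R).typ e).Negative)) :
    ∃ e0, e = Sum.inl e0 ∧ ((R.tgt e0 = some n ∧ (R.typ e0).Positive) ∨
      (R.src e0 = n ∧ (R.typ e0).Negative)) := by
  rcases h with ⟨h1, h2⟩ | ⟨h1, h2⟩
  · obtain ⟨e0, rfl, h3⟩ := h_tgt_inl.1 h1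
    exact ⟨e0, rfl, Or.inl ⟨h3, h2⟩⟩
  · obtain ⟨e0, rfl, h3⟩ := h_src_inl.1 h1
    exact ⟨e0, rfl, Or.inr ⟨h3, h2⟩⟩

theorem in_edge' {e : R.Edge} {n : R.Node}
    (h : (R.tgt e = some n ∧ (R.typ e).Positive) ∨ (R.src e = n ∧ (R.typ e).Negative)) :
    ((netClosure R).tgt (.inl e) = some (.inl n) ∧ ((netClosure R).typ (.inl e)).Positive) ∨
      ((netClosure R).src (.inl e) = .inl n ∧ ((netClosure R).typ (.inl e)).Negative) := by
  rcases h with ⟨h1, h2⟩ | ⟨h1, h2⟩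
  · exact Or.inl ⟨h_tgt_inl.2 ⟨e, rfl, h1⟩, h2⟩
  · exact Or.inr ⟨h_src_inl.2 ⟨e, rfl, h1⟩, h2⟩

theorem circ_sort_ne {b : BadC R} {n : (circNet (R.typ b.val).dual).S.Node} {s : LinkSort}
    (h : (circNet (R.typ b.val).dual).S.sort n = s) (h1 : s ≠ .ax) (h2 : s ≠ .tens)
    (h3 : s ≠ .parr) (h4 : s ≠ .one) : False := by
  rcases (cd b).sorts n with h' | h' | h' | h' <;> rw [h] at h' <;> simp_all

theorem phi_stut_none (hWF : R.WF) {T T' : SState (netClosure R)} {b : BadC R}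
    {x : (circNet (R.typ b.val).dual).S.Edge}
    (h1 : (circNet (R.typ b.val).dual).S.sort ((circNet (R.typ b.val).dual).S.src x) = .one)
    (h2 : T.f (.inr ⟨b, x⟩, []) = none)
    (ho : ∀ q, q ≠ (.inr ⟨b, x⟩, []) → T'.f q = T.f q)
    (h3 : T'.f (.inr ⟨b, x⟩, []) = some (.atom (.inr ⟨b, x⟩) [])) : phi T' = phi T := by
  apply SState.ext'
  intro q
  have hp : HOrig (R := R) (.inr ⟨b, x⟩, []) := Or.inr ⟨h1, rfl⟩
  by_cases hq : hO q = (.inr ⟨b, x⟩, [])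
  · have hg := gE_hO (R := R) q
    rw [hq] at hg
    have hi : R.InitPos q := by
      rw [← hg]
      obtain ⟨h4, h5⟩ := (cd b).one x h1
      refine ⟨b.2.1, (cd_pos_ns b x h4 []).1 ?_⟩
      rw [h5]
      exact ⟨.one, rfl, Or.inl rfl⟩
    rw [phi_f, phi_f, hq, h2, h3]
    simp only [proj, if_pos hi, piV, hg]
  · rw [phi_f, phi_f, ho _ hq]

theorem forward (hWF : R.WF) {T T' : SState (netClosure R)} (h : STrans (netClosure R) T T')
    (hinj : ∀ p q v, (phi T).f p = some v → (phi T).f q = some v → p = q) :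
    (phi T' = phi T ∧ ∃ p, HOrig p ∧ rank p (T.f p) ≠ 0) ∨ STrans R (phi T) (phi T') := by
  cases h with
  | @axUp p e e' m a h1 h2 h3 h4 h5 h6 h7 h8 h9 =>
    have hp : HOrig p := T.dom_subset p (by simp [h1])
    rcases a with n | ⟨b, n⟩ | b
    · right
      obtain ⟨e, rfl, z⟩ := h_src_inl.1 h3; replace h3 := z
      obtain ⟨e', rfl, z⟩ := h_src_inl.1 h6; replace h6 := z
      exact .axUp (phi_some hWF h1) h2 h3 h4 ((h_active hWF).1 h5) h6
        (fun h => h7 (congrArg Sum.inl h)) (phi_other h8) (phi_some hWF h9)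
    · left
      obtain ⟨x, rfl, z⟩ := h_src_inr h3; replace h3 := z
      obtain ⟨y, rfl, z⟩ := h_src_inr h6; replace h6 := z
      subst h3
      refine ⟨phi_stut h1 h8 h9 ?_, p, hp, ?_⟩
      · have := ((cd b).ax y x h6 (by rw [h6]; exact h4) (fun h => h7 (by rw [h]))).1
        simp only [piV, gE, this]
      · rw [h1]; exact rank_s h2
    · exact (h_src_cut h3).elim
  | @cutDown p e e' m a h1 h2 h3 h4 h5 h6 h7 h8 h9 =>
    have hp : HOrig p := T.dom_subset p (by simp [h1])
    rcases a with n | ⟨b, n⟩ | b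
    · right
      obtain ⟨e, rfl, z⟩ := h_tgt_inl.1 h3; replace h3 := z
      obtain ⟨e', rfl, z⟩ := h_tgt_inl.1 h6; replace h6 := z
      exact .cutDown (phi_some hWF h1) h2 h3 h4 ((h_active hWF).1 h5) h6
        (fun h => h7 (congrArg Sum.inl h)) (phi_other h8) (phi_some hWF h9)
    · exact (circ_sort_ne h4 (by simp) (by simp) (by simp) (by simp)).elim
    · left
      have hm := (cd b).main_addr
      rcases h_tgt_cut h3 with rfl | rfl <;> rcases h_tgt_cut h6 with rfl | rfl
      · exact (h7 rfl).elim
      · refine ⟨phi_stut h1 h8 h9 ?_, p, hp, ?_⟩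
        · simp only [piV, gE, hm, List.nil_append]
        · rw [h1]; exact rank_bad b.2 h2
      · refine ⟨phi_stut h1 h8 h9 ?_, p, hp, ?_⟩
        · simp only [piV, gE, hm, List.nil_append]
        · rw [h1]; exact rank_ns (cd b).main_side
      · exact (h7 rfl).elim
  | @multDown p e g m a c h1 h2 h3 h4 h5 h6 h7 h8 h9 =>
    have hp : HOrig p := T.dom_subset p (by simp [h1])
    rcases a with n | ⟨b, n⟩ | b
    · right
      obtain ⟨e, rfl, z⟩ := h_tgt_inl.1 h3; replace h3 := z
      obtain ⟨g, rfl, z⟩ := h_src_inl.1 h6; replace h6 := z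
      exact .multDown (phi_some hWF h1) h2 h3 h4 ((h_active hWF).1 h5) h6
        h7 (phi_other h8) (phi_some hWF h9)
    · left
      obtain ⟨x, rfl, hx, z⟩ := h_tgt_inrl h3; replace h3 := z
      obtain ⟨y, rfl, z⟩ := h_src_inr h6; replace h6 := z
      subst h6
      rw [h_pIdx_nmain b hx] at h7
      obtain ⟨k1, k2, k3⟩ := circ_mult hWF h3 h7
      refine ⟨phi_stut h1 h8 h9 ?_, p, hp, ?_⟩
      · simp only [piV, gE, k1, List.append_assoc, List.singleton_append]
      · rw [h1]; exact rank_ns k3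
    · rcases h4 with h4 | h4 <;> cases h4
  | @multUp p e g m a c h1 h2 h3 h4 h5 h6 h7 h8 h9 =>
    have hp : HOrig p := T.dom_subset p (by simp [h1])
    rcases a with n | ⟨b, n⟩ | b
    · right
      obtain ⟨e, rfl, z⟩ := h_tgt_inl.1 h6; replace h6 := z
      obtain ⟨g, rfl, z⟩ := h_src_inl.1 h3; replace h3 := z
      exact .multUp (phi_some hWF h1) h2 h3 h4 ((h_active hWF).1 h5) h6
        h7 (phi_other h8) (phi_some hWF h9)
    · left
      obtain ⟨x, rfl, hx, z⟩ := h_tgt_inrl h6; replace h6 := z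
      obtain ⟨y, rfl, z⟩ := h_src_inr h3; replace h3 := z
      subst h3
      rw [h_pIdx_nmain b hx] at h7
      obtain ⟨k1, k2, k3⟩ := circ_mult hWF h6 h7
      refine ⟨phi_stut h1 h8 h9 ?_, p, hp, ?_⟩
      · simp only [piV, gE, k1, List.append_assoc, List.singleton_append]
      · rw [h1]; exact rank_ns k2
    · rcases h4 with h4 | h4 <;> cases h4
  | @lockTok p e a h1 h2 h3 h4 h5 h6 h7 =>
    rcases a with n | ⟨b, n⟩ | b
    · right
      obtain ⟨e, rfl, z⟩ := h_src_inl.1 h3; replace h3 := z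
      exact .lockTok (phi_some hWF h1) h2 h3 h4 ((h_active hWF).1 h5)
        (phi_other h6) (phi_some hWF h7)
    · exact (circ_sort_ne h4 (by simp) (by simp) (by simp) (by simp)).elim
    · cases h4
  | @oneSpawn a e h1 h2 h3 h4 h5 h6 =>
    rcases a with n | ⟨b, n⟩ | b
    · right
      obtain ⟨e, rfl, z⟩ := h_src_inl.1 h3; replace h3 := z
      have hp : HOrig (R := R) (.inl e, []) := Or.inr ⟨by subst h3; exact h1, rfl⟩
      refine .oneSpawn (e := e) h1 ((h_active hWF).1 h2) h3 ?_ (phi_other h5) (phi_some hWF h6)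
      have hh : hO (R := R) (e, []) = (.inl e, []) := hO_gE hWF hp
      rw [phi_f, hh, h4]
      have : ¬ R.InitPos (e, []) := by
        rintro ⟨-, k⟩
        rw [wf_one hWF (e := e) (by rw [h3]; exact h1)] at k
        obtain ⟨a, k1, k2⟩ := k
        cases k1
        rcases k2 with k2 | ⟨_, k2⟩ <;> cases k2
      simp [proj, this]
    · left
      obtain ⟨x, rfl, z⟩ := h_src_inr h3; replace h3 := z
      subst h3
      refine ⟨phi_stut_none hWF h1 h4 h5 h6, (.inr ⟨b, x⟩, []), Or.inr ⟨h1, rfl⟩, ?_⟩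
      rw [h4]; simp [rank]
    · cases h1
  | @syncCross l h1 h2 h3 h4 h5 h6 h7 =>
    rcases l with n | ⟨b, n⟩ | b
    · right
      have find : ∀ q e m, (phi T).f q = some (.atom e m) →
          ((R.tgt e = some n ∧ (R.typ e).Positive) ∨ (R.src e = n ∧ (R.typ e).Negative)) →
          ∃ p, T.f p = some (.atom (.inl e) m) ∧ q = gE p := by
        intro q e m hq he
        obtain ⟨p, hp⟩ := h4 (.inl e) (in_edge' he) m ((phi T).val_valid _ _ hq)
        exact ⟨p, hp, hinj _ _ _ hq (phi_some hWF hp)⟩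
      refine .syncCross (l := n) h1 ((h_active hWF).1 h2) ?_ ?_ ?_ ?_ ?_
      · obtain ⟨p, e, m, k1, k2⟩ := h3
        obtain ⟨e, rfl, k3⟩ := in_edge k2
        exact ⟨gE p, e, m, phi_some hWF k1, k3⟩
      · intro e he m hm
        obtain ⟨p, hp⟩ := h4 (.inl e) (in_edge' he) m hm
        exact ⟨gE p, phi_some hWF hp⟩
      · intro q e m hq he hpos
        obtain ⟨p, hp, rfl⟩ := find q e m hq (Or.inl ⟨he, hpos⟩)
        obtain ⟨e', k1, k2, k3⟩ := h5 p _ m hp (h_tgt_inl.2 ⟨e, rfl, he⟩) hpos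
        obtain ⟨e', rfl, z⟩ := h_src_inl.1 k1; replace k1 := z
        exact ⟨e', k1, k2, phi_some hWF k3⟩
      · intro q e m hq he hneg
        obtain ⟨p, hp, rfl⟩ := find q e m hq (Or.inr ⟨he, hneg⟩)
        obtain ⟨e', k1, k2, k3⟩ := h6 p _ m hp (h_src_inl.2 ⟨e, rfl, he⟩) hneg
        obtain ⟨e', rfl, z⟩ := h_tgt_inl.1 k1; replace k1 := z
        exact ⟨e', k1, k2, phi_some hWF k3⟩
      · intro q hq
        rw [phi_f, phi_f, h7]
        intro e m he
        rw [← not_or]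
        intro hin
        obtain ⟨e, rfl, k⟩ := in_edge hin
        have := phi_some hWF he
        rw [gE_hO] at this
        rcases k with k | k
        · exact (hq e m this).1 k
        · exact (hq e m this).2 k
    · exact (circ_sort_ne h1 (by simp) (by simp) (by simp) (by simp)).elim
    · cases h1

end

open Formula Struct

open Classical in
noncomputable def upd {S : Struct} (T : SState S) (p : S.Edge × Addr) (v : PosVal S)
    (hp : S.InitPos p ∨ S.OnePos p) (hv : S.ValidVal v) : SState S where
  f := Function.update T.f p (some v)
  dom_subset q h := by
    by_cases hq : q = p
    · rw [hq]; exact hp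
    · rw [Function.update_of_ne hq] at h; exact T.dom_subset q h
  init_total q h := by
    by_cases hq : q = p
    · rw [hq, Function.update_self]; simp
    · rw [Function.update_of_ne hq]; exact T.init_total q h
  val_valid q w h := by
    by_cases hq : q = p
    · rw [hq, Function.update_self] at h
      obtain rfl := Option.some.inj h
      exact hv
    · rw [Function.update_of_ne hq] at h; exact T.val_valid q w h

theorem ex_upd {S : Struct} (T : SState S) (p : S.Edge × Addr) (v : PosVal S)
    (hp : S.InitPos p ∨ S.OnePos p) (hv : S.ValidVal v) :
    ∃ T' : SState S, (∀ q, q ≠ p → T'.f q = T.f q) ∧ T'.f p = some v :=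
  ⟨upd T p v hp hv, fun q hq => by simp [upd, hq], by simp [upd]⟩

section
variable {R : Struct}

def Prog (T : SState (netClosure R)) (p : (netClosure R).Edge × Addr) : Prop :=
  ∃ T', STrans (netClosure R) T T' ∧ phi T' = phi T ∧ (∀ q, q ≠ p → T'.f q = T.f q) ∧
    rank p (T'.f p) < rank p (T.f p)

theorem prog_of {T : SState (netClosure R)} {p : (netClosure R).Edge × Addr}
    (v v' : PosVal (netClosure R)) (hp : HOrig p) (h : T.f p = some v)
    (hv : (netClosure R).ValidVal v') (hpi : piV v' = piV v)
    (hr : rank p (some v') < rank p (some v))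
    (hs : ∀ T' : SState (netClosure R), (∀ q, q ≠ p → T'.f q = T.f q) → T'.f p = some v' →
      STrans (netClosure R) T T') : Prog T p := by
  obtain ⟨T', h1, h2⟩ := ex_upd T p v' hp hv
  refine ⟨T', hs _ h1 h2, phi_stut h h1 h2 hpi, h1, ?_⟩
  rw [h2, h]; exact hr

theorem rank_ns_pos {p : (netClosure R).Edge × Addr} {b : BadC R}
    {x : (circNet (R.typ b.val).dual).S.Edge} {m : Addr} (h : (cd b).side x = false)
    (h' : PosOcc ((circNet (R.typ b.val).dual).S.typ x) m) :
    rank p (some (.atom (.inr ⟨b, x⟩) m)) = ((cd b).addr x).length + 1 := by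
  simp [rank, h, h']

theorem rank_ns_neg {p : (netClosure R).Edge × Addr} {b : BadC R}
    {x : (circNet (R.typ b.val).dual).S.Edge} {m : Addr} (h : (cd b).side x = false)
    (h' : NegOcc ((circNet (R.typ b.val).dual).S.typ x) m) :
    rank p (some (.atom (.inr ⟨b, x⟩) m)) = m.length + 1 := by
  have : ¬ PosOcc ((circNet (R.typ b.val).dual).S.typ x) m := fun h => not_pos_neg h h'
  simp [rank, h, this]

theorem rank_s_neg {p : (netClosure R).Edge × Addr} {b : BadC R}
    {x : (circNet (R.typ b.val).dual).S.Edge} {m : Addr} (h : (cd b).side x = true)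
    (h' : NegOcc ((circNet (R.typ b.val).dual).S.typ x) m) :
    rank p (some (.atom (.inr ⟨b, x⟩) m)) = ((cd b).addr x).length + 2 := by
  simp [rank, h, h']

theorem rank_s_pos {p : (netClosure R).Edge × Addr} {b : BadC R}
    {x : (circNet (R.typ b.val).dual).S.Edge} {m : Addr} (h : (cd b).side x = true)
    (h' : PosOcc ((circNet (R.typ b.val).dual).S.typ x) m) :
    rank p (some (.atom (.inr ⟨b, x⟩) m)) = 0 := by
  have : ¬ NegOcc ((circNet (R.typ b.val).dual).S.typ x) m := fun h => not_pos_neg h' h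
  simp [rank, h, this]

theorem rank_inl_neg {p : (netClosure R).Edge × Addr} {e : R.Edge} {m : Addr}
    (h : NegOcc (R.typ e) m) : rank p (some (.atom (.inl e) m)) = 0 := by
  have : ¬ PosOcc (R.typ e) m := fun h' => not_pos_neg h' h
  simp [rank, this]

theorem rank_inl_bad {p : (netClosure R).Edge × Addr} {e : R.Edge} {m : Addr}
    (hb : Bad e) (h : PosOcc (R.typ e) m) :
    rank p (some (.atom (.inl e) m)) = m.length + 2 := by
  simp [rank, hb, h]

theorem src_inr_eq (b : BadC R) (x : (circNet (R.typ b.val).dual).S.Edge) :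
    (netClosure R).src (.inr ⟨b, x⟩) =
      .inr (.inl ⟨b, (circNet (R.typ b.val).dual).S.src x⟩) := rfl

theorem progress (hWF : R.WF) {T : SState (netClosure R)} {p : (netClosure R).Edge × Addr}
    (hp : HOrig p) (hr : rank p (T.f p) ≠ 0) : Prog T p := by
  cases hT : T.f p with
  | none =>
    rw [hT] at hr
    obtain ⟨e | ⟨b, x⟩, m⟩ := p
    · simp [rank] at hr
    · rcases hp with hp | hp
      · exact (T.init_total _ hp hT).elim
      · obtain ⟨h1, h2⟩ := hp
        change m = [] at h2
        subst h2
        have h1' : (circNet (R.typ b.val).dual).S.sort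
          ((circNet (R.typ b.val).dual).S.src x) = .one := h1
        obtain ⟨h4, h5⟩ := (cd b).one x h1
        have hpos : PosOcc ((circNet (R.typ b.val).dual).S.typ x) [] := by
          rw [h5]; exact ⟨.one, rfl, Or.inl rfl⟩
        have hh : HOrig (R := R) (.inr ⟨b, x⟩, []) := Or.inr ⟨h1, rfl⟩
        have hv : (netClosure R).ValidVal (.atom (.inr ⟨b, x⟩) []) := hpos.atomOcc
        obtain ⟨T', u1, u2⟩ := ex_upd T _ _ hh hv
        refine ⟨T', .oneSpawn (e := .inr ⟨b, x⟩) h1 h_active_inrl rfl hT u1 u2,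
          phi_stut_none hWF h1' hT u1 u2, u1, ?_⟩
        refine lt_of_eq_of_lt ((congrArg (rank _) u2).trans (rank_ns_pos h4 hpos)) ?_
        refine lt_of_lt_of_eq ?_ (congrArg (rank _) hT).symm
        simp [rank]
  | some v =>
    rw [hT] at hr
    have hval := T.val_valid _ _ hT
    rcases v with ⟨e | ⟨b, x⟩, m⟩ | ⟨e, i⟩
    · by_cases h : Bad e ∧ PosOcc (R.typ e) m
      · obtain ⟨hb, hpos⟩ := h
        let b : BadC R := ⟨e, hb⟩
        have hneg : NegOcc ((circNet (R.typ b.val).dual).S.typ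
            (circNet (R.typ b.val).dual).main) m := by
          rw [cd_neg_ns b _ (cd b).main_side, (cd b).main_addr]; exact hpos
        refine prog_of _ (.atom (.inr ⟨b, (circNet (R.typ b.val).dual).main⟩) m) hp hT
          hneg.atomOcc ?_ ?_ ?_
        · simp only [piV, gE, (cd b).main_addr, List.nil_append, b]
        · rw [rank_inl_bad hb hpos, rank_ns_neg (cd b).main_side hneg]; omega
        · intro T' h1 h2
          exact .cutDown (c := .inr (.inr b)) hT hpos (h_tgt_bad hb) rfl h_active_cut
            (h_tgt_main b) (fun h => by cases h) h1 h2
      · simp [rank, h] at hr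
    · have hval' : AtomOcc ((circNet (R.typ b.val).dual).S.typ x) m := hval
      cases hs : (cd b).side x
      · rcases pos_or_neg hval' with hpos | hneg
        · by_cases hx : x = (circNet (R.typ b.val).dual).main
          · subst hx
            have hneg : NegOcc (R.typ b.val) m := by
              have := (cd_pos_ns b _ hs m).1 hpos
              rwa [(cd b).main_addr] at this
            refine prog_of _ (.atom (.inl b.val) m) hp hT hneg.atomOcc ?_ ?_ ?_
            · simp only [piV, gE, (cd b).main_addr, List.nil_append]
            · rw [rank_inl_neg hneg, rank_ns_pos hs hpos]; omega
            · intro T' h1 h2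
              exact .cutDown (c := .inr (.inr b)) hT hpos (h_tgt_main b) rfl h_active_cut
                (h_tgt_bad b.2) (fun h => by cases h) h1 h2
          · have htn : (circNet (R.typ b.val).dual).S.tgt x ≠ none := by
              intro h
              rcases ((cd b).tgt_none x).1 h with h | h
              · exact hx h
              · rw [hs] at h; cases h
            obtain ⟨n, hn⟩ := Option.ne_none_iff_exists'.1 htn
            obtain ⟨h3, g, rfl⟩ := (cd b).tgt_mult x n hn
            obtain ⟨c, h4, h5, h6⟩ := (cd b).mult x g hn
            have ha : (cd b).addr g ++ (c :: m) = (cd b).addr x ++ m := by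
              rw [h5]; simp
            have hpos' : PosOcc ((circNet (R.typ b.val).dual).S.typ g) (c :: m) := by
              rw [cd_pos_ns b g h6, ha, ← cd_pos_ns b x hs]; exact hpos
            refine prog_of _ (.atom (.inr ⟨b, g⟩) (c :: m)) hp hT hpos'.atomOcc ?_ ?_ ?_
            · simp only [piV, gE, ha]
            · rw [rank_ns_pos h6 hpos', rank_ns_pos hs hpos, h5]; simp
            · intro T' h1 h2
              refine .multDown (n := (netClosure R).src (.inr ⟨b, g⟩)) (b := c) hT hpos ?_ h3
                h_active_inrl rfl ?_ h1 h2
              · rw [h_tgt_nmain b hx, hn]; rfl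
              · rw [h_pIdx_nmain b hx]; exact h4
        · rcases m with _ | ⟨c, m⟩
          · have hax := (cd b).leaf x hs hneg
            obtain ⟨y, hy, hyx⟩ := (cd b).ax_ex x hax
            obtain ⟨k1, k2⟩ := (cd b).ax x y hyx.symm hax hy.symm
            rw [hs] at k2
            have hpos : PosOcc ((circNet (R.typ b.val).dual).S.typ y) [] := by
              rw [cd_pos_s b y k2, ← k1, ← cd_neg_ns b x hs]; exact hneg
            refine prog_of _ (.atom (.inr ⟨b, y⟩) []) hp hT hpos.atomOcc ?_ ?_ ?_
            · simp only [piV, gE, k1]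
            · rw [rank_s_pos k2 hpos, rank_ns_neg hs hneg]; simp
            · intro T' h1 h2
              refine .axUp (a := (netClosure R).src (.inr ⟨b, x⟩)) hT hneg rfl hax
                h_active_inrl ?_ ?_ h1 h2
              · rw [src_inr_eq, src_inr_eq, hyx]
              · intro h; cases h; exact hy rfl
          · have hsub : sub ((circNet (R.typ b.val).dual).S.typ x) (c :: m) ≠ none := by
              obtain ⟨a, ha, -⟩ := hval'
              rw [ha]; simp
            obtain ⟨h3, y, h4, h5⟩ := (cd b).up x c m hs hsub
            obtain ⟨k1, -, k3⟩ := circ_mult hWF h4 h5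
            have hy : y ≠ (circNet (R.typ b.val).dual).main := by
              intro h
              have := ((cd b).tgt_none y).2 (Or.inl h)
              rw [h4] at this; cases this
            have ha : (cd b).addr y ++ m = (cd b).addr x ++ (c :: m) := by
              rw [k1]; simp
            have hneg' : NegOcc ((circNet (R.typ b.val).dual).S.typ y) m := by
              rw [cd_neg_ns b y k3, ha, ← cd_neg_ns b x hs]; exact hneg
            refine prog_of _ (.atom (.inr ⟨b, y⟩) m) hp hT hneg'.atomOcc ?_ ?_ ?_
            · simp only [piV, gE, ha]
            · rw [rank_ns_neg k3 hneg', rank_ns_neg hs hneg]; simp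
            · intro T' h1 h2
              refine .multUp (n := (netClosure R).src (.inr ⟨b, x⟩)) (b := c) hT hneg rfl h3
                h_active_inrl ?_ ?_ h1 h2
              · rw [h_tgt_nmain b hy, h4]; rfl
              · rw [h_pIdx_nmain b hy]; exact h5
      · obtain rfl := cd_side_nil b x hs hval'
        rcases pos_or_neg hval' with hpos | hneg
        · exact (hr (rank_s_pos hs hpos)).elim
        · have hax := (cd b).side_ax x hs
          obtain ⟨y, hy, hyx⟩ := (cd b).ax_ex x hax
          obtain ⟨k1, k2⟩ := (cd b).ax x y hyx.symm hax hy.symm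
          rw [hs] at k2
          have hpos : PosOcc ((circNet (R.typ b.val).dual).S.typ y) [] := by
            rw [cd_pos_ns b y k2, ← k1, ← cd_neg_s b x hs]; exact hneg
          refine prog_of _ (.atom (.inr ⟨b, y⟩) []) hp hT hpos.atomOcc ?_ ?_ ?_
          · simp only [piV, gE, k1]
          · rw [rank_ns_pos k2 hpos, rank_s_neg hs hneg, k1]; omega
          · intro T' h1 h2
            refine .axUp (a := (netClosure R).src (.inr ⟨b, x⟩)) hT hneg rfl hax
              h_active_inrl ?_ ?_ h1 h2
            · rw [src_inr_eq, src_inr_eq, hyx]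
            · intro h; cases h; exact hy rfl
    · simp [rank] at hr

def ZSt (T : SState (netClosure R)) : Prop := ∀ p, HOrig p → rank p (T.f p) = 0

theorem hOrig_finite : {p : (netClosure R).Edge × Addr | HOrig p}.Finite := by
  have : {p : (netClosure R).Edge × Addr | HOrig p} ⊆
      ⋃ e : (netClosure R).Edge, (fun m => (e, m)) ''
        ({m : Addr | sub ((netClosure R).typ e) m ≠ none} ∪ {[]}) := by
    rintro ⟨e, m⟩ h
    refine Set.mem_iUnion.2 ⟨e, m, ?_, rfl⟩
    rcases h with ⟨-, a, ha, -⟩ | ⟨-, h⟩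
    · left; change sub _ m ≠ none; rw [ha]; simp
    · right; exact h
  refine Set.Finite.subset (Set.finite_iUnion fun e => Set.Finite.image _ ?_) this
  exact (finite_sub _).union (Set.finite_singleton _)

theorem normalizeZ (hWF : R.WF) (T : SState (netClosure R)) :
    ∃ T', Relation.ReflTransGen (STrans (netClosure R)) T T' ∧ ZSt T' ∧ phi T' = phi T := by
  classical
  generalize hN : ∑ p ∈ (hOrig_finite (R := R)).toFinset, rank p (T.f p) = N
  induction N using Nat.strong_induction_on generalizing T with
  | _ N ih =>
    by_cases hZ : ZSt T
    · exact ⟨T, .refl, hZ, rfl⟩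
    · unfold ZSt at hZ
      push Not at hZ
      obtain ⟨p, hp, hr⟩ := hZ
      obtain ⟨T1, h1, h2, h3, h4⟩ := progress hWF hp hr
      have hlt : ∑ p ∈ (hOrig_finite (R := R)).toFinset, rank p (T1.f p) < N := by
        rw [← hN]
        refine Finset.sum_lt_sum (fun q _ => ?_) ⟨p, by simpa using hp, h4⟩
        by_cases hq : q = p
        · rw [hq]; exact h4.le
        · rw [h3 q hq]
      obtain ⟨T2, k1, k2, k3⟩ := ih _ hlt T1 rfl
      exact ⟨T2, .head h1 k1, k2, k3.trans h2⟩

end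

open Formula Struct

section
variable {R : Struct}

def io (w : PosVal R) : PosVal (netClosure R) :=
  match w with
  | .atom e m => .atom (.inl e) m
  | .lock e i => .lock (.inl e) i

theorem piV_io (w : PosVal R) : piV (io w) = w := by
  cases w <;> rfl

theorem io_valid {w : PosVal R} (h : R.ValidVal w) : (netClosure R).ValidVal (io w) := by
  cases w <;> exact h

theorem rank_inr_zero {p : (netClosure R).Edge × Addr} {b : BadC R}
    {x : (circNet (R.typ b.val).dual).S.Edge} {m : Addr}
    (h : rank p (some (.atom (.inr ⟨b, x⟩) m)) = 0)
    (hv : AtomOcc ((circNet (R.typ b.val).dual).S.typ x) m) :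
    (cd b).side x = true ∧ m = [] ∧ PosOcc ((circNet (R.typ b.val).dual).S.typ x) [] := by
  cases hs : (cd b).side x
  · exact (rank_ns hs h).elim
  · obtain rfl := cd_side_nil b x hs hv
    refine ⟨rfl, rfl, ?_⟩
    rcases pos_or_neg hv with h' | h'
    · exact h'
    · exact (rank_s h' h).elim

theorem lock_inr_invalid {b : BadC R} {x : (circNet (R.typ b.val).dual).S.Edge} {i : ℕ}
    (h : (netClosure R).ValidVal (.lock (.inr ⟨b, x⟩) i)) : False :=
  circ_sort_ne (b := b) (n := (circNet (R.typ b.val).dual).S.src x) h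
    (by simp) (by simp) (by simp) (by simp)

theorem phi_cases (hWF : R.WF) {T : SState (netClosure R)} (hZ : ZSt T) {q : R.Edge × Addr}
    {w : PosVal R} (h : (phi T).f q = some w) :
    T.f (hO q) = some (io w) ∨ ∃ (b : BadC R) (x : (circNet (R.typ b.val).dual).S.Edge),
      T.f (hO q) = some (.atom (.inr ⟨b, x⟩) []) ∧ (cd b).side x = true ∧
      PosOcc ((circNet (R.typ b.val).dual).S.typ x) [] ∧ w = .atom b.val ((cd b).addr x) := by
  have hq : HOrig (hO q) := hOrig_hO ((phi T).dom_subset q (by simp [h]))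
  have hr := hZ _ hq
  rw [phi_f] at h
  cases hT : T.f (hO q) with
  | none =>
    exfalso
    rw [hT] at h hr
    by_cases hi : R.InitPos q
    · have hg := gE_hO (R := R) q
      generalize hO (R := R) q = p at *
      obtain ⟨e | ⟨b, x⟩, m⟩ := p
      · have hb := hOrig_inl_not_bad hWF hq
        subst hg
        exact T.init_total (.inl e, m) ⟨h_tgt_none_inl.2 ⟨hi.1, hb⟩, hi.2⟩ hT
      · simp [rank] at hr
    · simp [proj, hi] at h
  | some v =>
    rw [hT] at h hr
    have h : piV v = w := Option.some.inj h
    subst h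
    have hv := T.val_valid _ _ hT
    rcases v with ⟨e | ⟨b, x⟩, m⟩ | ⟨e | ⟨b, x⟩, i⟩
    · left; rfl
    · right
      obtain ⟨h1, rfl, h2⟩ := rank_inr_zero hr hv
      exact ⟨b, x, rfl, h1, h2, by simp [piV, gE]⟩
    · left; rfl
    · exact (lock_inr_invalid hv).elim

theorem zlift_tok (hWF : R.WF) {T : SState (netClosure R)} (hZ : ZSt T) {q : R.Edge × Addr}
    {e : R.Edge} {m : Addr} (h : (phi T).f q = some (.atom e m))
    (h' : NegOcc (R.typ e) m ∨ R.tgt e ≠ none) :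
    T.f (hO q) = some (.atom (.inl e) m) := by
  rcases phi_cases hWF hZ h with h1 | ⟨b, x, -, h2, h3, h4⟩
  · exact h1
  · exfalso
    injection h4 with h5 h6
    subst h5 h6
    rcases h' with h' | h'
    · have := (cd_pos_s b x h2 []).1 h3
      rw [List.append_nil] at this
      exact not_pos_neg this h'
    · exact h' b.2.1

theorem lift_upd (hWF : R.WF) {T : SState (netClosure R)} {S' : SState R} {q : R.Edge × Addr}
    {w : PosVal R} (hq : HOrig (hO q))
    (ho : ∀ q', q' ≠ q → S'.f q' = (phi T).f q') (hs : S'.f q = some w) :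
    ∃ T' : SState (netClosure R), (∀ p, p ≠ hO q → T'.f p = T.f p) ∧
      T'.f (hO q) = some (io w) ∧ phi T' = S' := by
  obtain ⟨T', h1, h2⟩ := ex_upd T (hO q) (io w) hq (io_valid (S'.val_valid _ _ hs))
  refine ⟨T', h1, h2, ?_⟩
  apply SState.ext'
  intro q'
  by_cases hq' : q' = q
  · subst hq'
    have := phi_some hWF h2
    rw [gE_hO, piV_io] at this
    rw [this, hs]
  · rw [phi_other h1 q' (by rw [gE_hO]; exact hq'), ho q' hq']

theorem tgt_inl {e : R.Edge} {n : R.Node} (h : R.tgt e = some n) :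
    (netClosure R).tgt (.inl e) = some (.inl n) := h_tgt_inl.2 ⟨e, rfl, h⟩

theorem src_inl {e : R.Edge} {n : R.Node} (h : R.src e = n) :
    (netClosure R).src (.inl e) = .inl n := h_src_inl.2 ⟨e, rfl, h⟩

theorem lift_sync (hWF : R.WF) {T : SState (netClosure R)} {S' : SState R}
    (M : R.Edge × Addr → Prop) (hM : ∀ q, M q → (phi T).f q ≠ none)
    (h1 : ∀ q, M q → S'.f q ≠ none) (h2 : ∀ q, ¬ M q → S'.f q = (phi T).f q) :
    ∃ T' : SState (netClosure R), (∀ p, ¬ (HOrig p ∧ M (gE p)) → T'.f p = T.f p) ∧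
      (∀ p w, HOrig p → M (gE p) → S'.f (gE p) = some w → T'.f p = some (io w)) ∧
      phi T' = S' := by
  classical
  let T' : SState (netClosure R) :=
    { f := fun p => if HOrig p ∧ M (gE p) then (S'.f (gE p)).map io else T.f p
      dom_subset := by
        intro p hp
        by_cases h : HOrig p ∧ M (gE p)
        · exact h.1
        · rw [if_neg h] at hp; exact T.dom_subset p hp
      init_total := by
        intro p hp
        by_cases h : HOrig p ∧ M (gE p)
        · rw [if_pos h]
          intro h'
          exact h1 _ h.2 (Option.map_eq_none_iff.1 h')
        · rw [if_neg h]; exact T.init_total p hp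
      val_valid := by
        intro p v hv
        by_cases h : HOrig p ∧ M (gE p)
        · rw [if_pos h] at hv
          obtain ⟨w, hw, rfl⟩ := Option.map_eq_some_iff.1 hv
          exact io_valid (S'.val_valid _ _ hw)
        · rw [if_neg h] at hv; exact T.val_valid p v hv }
  have f1 : ∀ p, ¬ (HOrig p ∧ M (gE p)) → T'.f p = T.f p := fun p hp => if_neg hp
  have f2 : ∀ p w, HOrig p → M (gE p) → S'.f (gE p) = some w → T'.f p = some (io w) := by
    intro p w h h' hs
    have : T'.f p = (S'.f (gE p)).map io := if_pos ⟨h, h'⟩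
    rw [this, hs]; rfl
  refine ⟨T', f1, f2, ?_⟩
  apply SState.ext'
  intro q
  by_cases hq : M q
  · have ho : HOrig (hO q) := hOrig_hO ((phi T).dom_subset q (hM q hq))
    obtain ⟨w, hw⟩ := Option.ne_none_iff_exists'.1 (h1 q hq)
    have := phi_some hWF (f2 (hO q) w ho (by rw [gE_hO]; exact hq) (by rw [gE_hO]; exact hw))
    rw [gE_hO, piV_io] at this
    rw [this, hw]
  · rw [h2 q hq, phi_f, phi_f, f1]
    intro h; rw [gE_hO] at h; exact hq h.2

theorem zlift (hWF : R.WF) {T : SState (netClosure R)} (hZ : ZSt T) {S' : SState R}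
    (h : STrans R (phi T) S') : ∃ T', STrans (netClosure R) T T' ∧ phi T' = S' := by
  have hdom : ∀ q v, (phi T).f q = some v → HOrig (hO q) := fun q v h =>
    hOrig_hO ((phi T).dom_subset q (by simp [h]))
  cases h with
  | @axUp q e e' m a h1 h2 h3 h4 h5 h6 h7 h8 h9 =>
    have ht := zlift_tok hWF hZ h1 (Or.inl h2)
    obtain ⟨T', k1, k2, k3⟩ := lift_upd hWF (hdom _ _ h1) h8 h9
    exact ⟨T', .axUp (a := .inl a) ht h2 (src_inl h3) h4 ((h_active hWF).2 h5) (src_inl h6)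
      (fun h => h7 (Sum.inl.inj h)) k1 k2, k3⟩
  | @cutDown q e e' m a h1 h2 h3 h4 h5 h6 h7 h8 h9 =>
    have ht := zlift_tok hWF hZ h1 (Or.inr (by simp [h3]))
    obtain ⟨T', k1, k2, k3⟩ := lift_upd hWF (hdom _ _ h1) h8 h9
    exact ⟨T', .cutDown (c := .inl a) ht h2 (tgt_inl h3) h4 ((h_active hWF).2 h5) (tgt_inl h6)
      (fun h => h7 (Sum.inl.inj h)) k1 k2, k3⟩
  | @multDown q e g m a c h1 h2 h3 h4 h5 h6 h7 h8 h9 =>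
    have ht := zlift_tok hWF hZ h1 (Or.inr (by simp [h3]))
    obtain ⟨T', k1, k2, k3⟩ := lift_upd hWF (hdom _ _ h1) h8 h9
    exact ⟨T', .multDown (n := .inl a) (b := c) ht h2 (tgt_inl h3) h4 ((h_active hWF).2 h5)
      (src_inl h6) h7 k1 k2, k3⟩
  | @multUp q e g m a c h1 h2 h3 h4 h5 h6 h7 h8 h9 =>
    have ht := zlift_tok hWF hZ h1 (Or.inl h2)
    obtain ⟨T', k1, k2, k3⟩ := lift_upd hWF (hdom _ _ h1) h8 h9
    exact ⟨T', .multUp (n := .inl a) (b := c) ht h2 (src_inl h3) h4 ((h_active hWF).2 h5)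
      (tgt_inl h6) h7 k1 k2, k3⟩
  | @lockTok q e a h1 h2 h3 h4 h5 h6 h7 =>
    have ht := zlift_tok hWF hZ h1 (Or.inl (by rw [h2]; exact ⟨.bot, rfl, Or.inl rfl⟩))
    obtain ⟨T', k1, k2, k3⟩ := lift_upd hWF (hdom _ _ h1) h6 h7
    exact ⟨T', .lockTok (b' := .inl a) ht h2 (src_inl h3) h4 ((h_active hWF).2 h5) k1 k2, k3⟩
  | @oneSpawn a e h1 h2 h3 h4 h5 h6 =>
    have hp : HOrig (R := R) (.inl e, []) := Or.inr ⟨by subst h3; exact h1, rfl⟩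
    have hh : hO (R := R) (e, []) = (.inl e, []) := hO_gE hWF hp
    obtain ⟨T', k1, k2, k3⟩ := lift_upd hWF (q := (e, [])) (by rw [hh]; exact hp) h5 h6
    rw [hh] at k1 k2
    refine ⟨T', .oneSpawn (n := .inl a) (e := .inl e) h1 ((h_active hWF).2 h2) (src_inl h3)
      ?_ k1 k2, k3⟩
    rw [phi_f, hh] at h4
    cases hT : T.f (.inl e, []) with
    | none => rfl
    | some v => rw [hT] at h4; cases h4
  | @syncCross l h1 h2 h3 h4 h5 h6 h7 =>
    have lk : ∀ q e m, (phi T).f q = some (.atom e m) →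
        ((R.tgt e = some l ∧ (R.typ e).Positive) ∨ (R.src e = l ∧ (R.typ e).Negative)) →
        T.f (hO q) = some (.atom (.inl e) m) := by
      intro q e m hq he
      refine zlift_tok hWF hZ hq ?_
      rcases he with he | he
      · right; rw [he.1]; simp
      · left; exact he.2.negOcc ((phi T).val_valid _ _ hq)
    let M : R.Edge × Addr → Prop := fun q => ∃ e m, (phi T).f q = some (.atom e m) ∧
      ((R.tgt e = some l ∧ (R.typ e).Positive) ∨ (R.src e = l ∧ (R.typ e).Negative))
    obtain ⟨T', k1, k2, k3⟩ := lift_sync hWF (T := T) (S' := S') M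
      (by rintro q ⟨e, m, hq, -⟩; rw [hq]; simp)
      (by
        rintro q ⟨e, m, hq, he | he⟩
        · obtain ⟨e', -, -, h⟩ := h5 q e m hq he.1 he.2
          rw [h]; simp
        · obtain ⟨e', -, -, h⟩ := h6 q e m hq he.1 he.2
          rw [h]; simp)
      (by
        intro q hq
        refine h7 q fun e m he => ⟨fun h => hq ⟨e, m, he, Or.inl h⟩,
          fun h => hq ⟨e, m, he, Or.inr h⟩⟩)
    refine ⟨T', .syncCross (l := .inl l) h1 ((h_active hWF).2 h2) ?_ ?_ ?_ ?_ ?_, k3⟩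
    · obtain ⟨q, e, m, hq, he⟩ := h3
      exact ⟨hO q, .inl e, m, lk q e m hq he, in_edge' he⟩
    · intro e he m hm
      obtain ⟨e, rfl, he'⟩ := in_edge he
      obtain ⟨q, hq⟩ := h4 e he' m hm
      exact ⟨hO q, lk q e m hq he'⟩
    · intro p e m hp he hpos
      have ho : HOrig p := T.dom_subset p (by simp [hp])
      obtain ⟨e, rfl, he⟩ := h_tgt_inl.1 he
      have hq : (phi T).f (gE p) = some (.atom e m) := phi_some hWF hp
      obtain ⟨e', j1, j2, j3⟩ := h5 _ e m hq (by assumption) hpos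
      exact ⟨.inl e', src_inl j1, j2, k2 p _ ho ⟨e, m, hq, Or.inl ⟨by assumption, hpos⟩⟩ j3⟩
    · intro p e m hp he hneg
      have ho : HOrig p := T.dom_subset p (by simp [hp])
      obtain ⟨e, rfl, he⟩ := h_src_inl.1 he
      have hq : (phi T).f (gE p) = some (.atom e m) := phi_some hWF hp
      obtain ⟨e', j1, j2, j3⟩ := h6 _ e m hq (by assumption) hneg
      exact ⟨.inl e', tgt_inl j1, j2, k2 p _ ho ⟨e, m, hq, Or.inr ⟨by assumption, hneg⟩⟩ j3⟩
    · intro p hp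
      apply k1
      rintro ⟨ho, e, m, hq, he⟩
      have := lk _ e m hq he
      rw [hO_gE hWF ho] at this
      have h8 := hp (.inl e) m this
      rcases in_edge' he with h | h
      · exact h8.1 h
      · exact h8.2 h

end

open Formula Struct

section
variable {R : Struct}

theorem fin_pull {e : (netClosure R).Edge} {m : Addr} (h : (netClosure R).FinPos (e, m)) :
    R.FinPos (gE (e, m)) := by
  obtain ⟨h1, h2⟩ := h
  rcases e with e | ⟨b, x⟩
  · exact ⟨(h_tgt_none_inl.1 h1).1, h2⟩
  · exact ⟨b.2.1, (cd_pos_s b x ((h_tgt_none_inr b).1 h1) m).1 h2⟩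

theorem final_phi (hWF : R.WF) {T : SState (netClosure R)} (hZ : ZSt T) (h : T.Final) :
    (phi T).Final := by
  obtain ⟨hA, hB⟩ := h
  constructor
  · intro q w hq
    rcases phi_cases hWF hZ hq with h1 | ⟨b, x, h1, h2, h3, rfl⟩
    · rcases w with ⟨e, m⟩ | ⟨e, i⟩
      · rcases hA _ _ h1 with ⟨e', m', h4, h5⟩ | ⟨e', i, h4⟩
        · injection h4 with h6 h7
          subst h6 h7
          exact Or.inl ⟨e, m, rfl, fin_pull h5⟩
        · cases h4
      · exact Or.inr ⟨e, i, rfl⟩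
    · left
      refine ⟨_, _, rfl, b.2.1, ?_⟩
      have := (cd_pos_s b x h2 []).1 h3
      rwa [List.append_nil] at this
  · rintro e m ⟨h1, h2⟩
    have h2 : PosOcc (R.typ e) m := h2
    have h1 : R.tgt e = none := h1
    by_cases hb : Bad e
    · have hs : ∃ a, sub (R.typ e).dual m = some a ∧ IsAtom a ∧ a ≠ .one := by
        obtain ⟨a, ha, ha'⟩ := h2
        refine ⟨a.dual, by rw [sub_dual, ha]; rfl, ?_⟩
        rcases ha' with rfl | ⟨n, rfl⟩ <;> exact ⟨trivial, by simp [dual]⟩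
      obtain ⟨a, s1, s2, s3⟩ := hs
      let b : BadC R := ⟨e, hb⟩
      obtain ⟨x, x1, x2⟩ := (cd b).ex_side m a s1 s2 s3
      obtain ⟨p, hp⟩ := hB (.inr ⟨b, x⟩) [] ⟨(h_tgt_none_inr b).2 x2,
        (cd_pos_s b x x2 []).2 (by rw [x1, List.append_nil]; exact h2)⟩
      have := phi_some hWF hp
      refine ⟨_, this.trans ?_⟩
      simp [piV, gE, x1, b]
    · obtain ⟨p, hp⟩ := hB (.inl e) m ⟨h_tgt_none_inl.2 ⟨h1, hb⟩, h2⟩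
      exact ⟨_, phi_some hWF hp⟩

theorem phi_final (hWF : R.WF) {T : SState (netClosure R)} (hZ : ZSt T) (h : (phi T).Final) :
    T.Final := by
  obtain ⟨hA, hB⟩ := h
  constructor
  · intro p v hp
    have hr := hZ p (T.dom_subset p (by simp [hp]))
    have hv := T.val_valid _ _ hp
    rw [hp] at hr
    rcases v with ⟨e | ⟨b, x⟩, m⟩ | ⟨e, i⟩
    · left
      refine ⟨_, _, rfl, ?_⟩
      rcases hA _ _ (phi_some hWF hp) with ⟨e', m', h4, h5⟩ | ⟨e', i, h4⟩
      · injection h4 with h6 h7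
        subst h6 h7
        exact ⟨h_tgt_none_inl.2 ⟨h5.1, fun hb => rank_bad hb h5.2 hr⟩, h5.2⟩
      · cases h4
    · left
      obtain ⟨h1, rfl, h2⟩ := rank_inr_zero hr hv
      exact ⟨_, _, rfl, (h_tgt_none_inr b).2 h1, h2⟩
    · exact Or.inr ⟨_, _, rfl⟩
  · intro e m hf
    have hf' := fin_pull hf
    obtain ⟨q, hq⟩ := hB _ _ hf'
    have ho : HOrig (hO q) := hOrig_hO ((phi T).dom_subset q (by simp [hq]))
    rcases e with e | ⟨b, x⟩
    · rcases phi_cases hWF hZ hq with h1 | ⟨b, x, h1, h2, h3, h4⟩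
      · exact ⟨_, h1⟩
      · injection h4 with h5 h6
        have h5 : e = b.val := h5
        subst h5
        exact ((h_tgt_none_inl.1 hf.1).2 b.2).elim
    · have hs := (h_tgt_none_inr b).1 hf.1
      obtain rfl := cd_side_nil b x hs hf.2.atomOcc
      rcases phi_cases hWF hZ hq with h1 | ⟨b', x', h1, h2, h3, h4⟩
      · exfalso
        have hr := hZ _ ho
        rw [h1] at hr
        exact rank_bad b.2 hf'.2 hr
      · injection h4 with h5 h6
        have h5 : b = b' := Subtype.ext h5
        subst h5
        have h6 : (cd b).addr x ++ [] = (cd b).addr x' := h6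
        rw [List.append_nil] at h6
        obtain rfl := (cd b).inj x x' h6 (hs.trans h2.symm)
        exact ⟨_, h1⟩

theorem reach_phi (hWF : R.WF) {T : SState (netClosure R)}
    (h : Relation.ReflTransGen (STrans (netClosure R)) (initState (netClosure R)) T) :
    Relation.ReflTransGen (STrans R) (initState R) (phi T) := by
  induction h with
  | refl => rw [phi_init hWF]
  | tail _ hs ih =>
    rcases forward hWF hs (fun p q v hp hq => reach_injective hWF ih hp hq) with ⟨h, -⟩ | h
    · rw [h]; exact ih
    · exact ih.tail h

theorem reach_lift (hWF : R.WF) {S : SState R}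
    (h : Relation.ReflTransGen (STrans R) (initState R) S) :
    ∃ T, Relation.ReflTransGen (STrans (netClosure R)) (initState (netClosure R)) T ∧ ZSt T ∧
      phi T = S := by
  induction h with
  | refl =>
    obtain ⟨T, h1, h2, h3⟩ := normalizeZ hWF (initState (netClosure R))
    exact ⟨T, h1, h2, h3.trans (phi_init hWF)⟩
  | tail _ hs ih =>
    obtain ⟨T, h1, h2, rfl⟩ := ih
    obtain ⟨T', h3, h4⟩ := zlift hWF h2 hs
    obtain ⟨T'', h5, h6, h7⟩ := normalizeZ hWF T'
    exact ⟨T'', (h1.tail h3).trans h5, h6, h7.trans h4⟩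

end

theorem siam_main (R : Struct) (hWF : R.WF) :
    DeadlockFree R ↔ DeadlockFree (netClosure R) := by
  constructor
  · intro h T hT hst
    have hZ : ZSt T := by
      intro p hp
      by_contra hr
      obtain ⟨T', h1, -⟩ := progress hWF hp hr
      exact hst T' h1
    refine phi_final hWF hZ (h _ (reach_phi hWF hT) fun S' hS => ?_)
    obtain ⟨T', h1, -⟩ := zlift hWF hZ hS
    exact hst T' h1
  · intro h S hS hst
    obtain ⟨T, hT, hZ, rfl⟩ := reach_lift hWF hS
    refine final_phi hWF hZ (h T hT fun T' hT' => ?_)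
    rcases forward hWF hT' (fun p q v hp hq => reach_injective hWF hS hp hq) with
      ⟨-, p, hp, hr⟩ | h'
    · exact hr (hZ p hp)
    · exact hst _ h'

/-- **Deadlock freedom and closures.**  The SIAM machine of an SMLL net `R`
is deadlock-free if and only if the SIAM machine of its closure `R̂` (each
`⊥`-containing conclusion `A` of `R` is cut against the main conclusion of
the net `R°(A⊥)`) is deadlock-free. -/
theorem siam_closure_deadlock_free (R : Struct) (hWF : R.WF) (hC : R.Correct) :
    DeadlockFree R ↔ DeadlockFree (netClosure R) := siam_main R hWF
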